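/- arXiv:2008.06766 — 2 statements merged into one kernel-verified Lean document; each statement's English description precedes it below -/
import Mathlib

section
/- Let Y and Z be independent squared Bessel processes of dimension 2 beginning at space-time points (y₀,t₀) ∈ [0,1]² and (z₀,s₀) ∈ [0,1]² respectively, and let σ = inf{s > s₀ ∨ t₀ : Z(s) = Y(s) or Z(s) ∨ Y(s) = 2} ∧ 2. Then inf over all (y₀,t₀,z₀,s₀) ∈ [0,1]⁴ of P(σ = inf{s > s₀ ∨ t₀ : Z(s) = Y(s)}) is strictly positive, i.e. with probability bounded below uniformly in the starting data, the processes meet before either exceeds level 2 and before time 2. -/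
open MeasureTheory ProbabilityTheory Filter
open scoped ENNReal NNReal

noncomputable section

namespace Paper

/-- A real-valued process indexed by `t ∈ [t0, ∞)` is a martingale w.r.t. the filtration `F`. -/
def MartingaleFrom {Ω : Type*} [MeasureSpace Ω] (t0 : ℝ) (F : ℝ → MeasurableSpace Ω)
    (X : ℝ → Ω → ℝ) : Prop :=
  (∀ t : ℝ, t0 ≤ t → Integrable (X t) (volume : Measure Ω)) ∧
  ∀ s t : ℝ, t0 ≤ s → s ≤ t →
    (volume : Measure Ω)[X t | F s] =ᵐ[(volume : Measure Ω)] X s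

/-- `Y` is a solution, started at time `t0` from value `y0`, of the SDE
`dY = b(t, Y) dt + √(a(t, Y)) dB`, formulated via the martingale problem: for every `C²`
compactly supported `f`, `f(Y_t) − ∫_{t0}^t (b f' + (a/2) f'')(s, Y_s) ds` is a martingale
in some filtration to which `Y` is adapted. -/
def IsDiffusionFrom {Ω : Type*} [MeasureSpace Ω] (t0 : ℝ) (b a : ℝ → ℝ → ℝ) (y0 : ℝ)
    (Y : Ω → ℝ → ℝ) : Prop :=
  (∀ t : ℝ, Measurable fun ω => Y ω t) ∧
  (∀ᵐ ω ∂(volume : Measure Ω), ContinuousOn (Y ω) (Set.Ici t0) ∧ Y ω t0 = y0) ∧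
  ∃ F : ℝ → MeasurableSpace Ω, Monotone F ∧ (∀ t, F t ≤ (inferInstance : MeasurableSpace Ω)) ∧
    (∀ t : ℝ, t0 ≤ t → @Measurable Ω ℝ (F t) _ fun ω => Y ω t) ∧
    ∀ f : ℝ → ℝ, ContDiff ℝ 2 f → HasCompactSupport f →
      MartingaleFrom t0 F fun t ω =>
        f (Y ω t) - ∫ s in Set.Ioc t0 t,
          (b s (Y ω s) * deriv f (Y ω s) + a s (Y ω s) / 2 * iteratedDeriv 2 f (Y ω s))

/-- The stopping time `σ = inf{s > s0 ∨ t0 : Z(s) = Y(s) or Z(s) ∨ Y(s) = 2} ∧ 2`. -/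
def besqSigma (t0 s0 : ℝ) (Y Z : ℝ → ℝ) : ℝ :=
  sInf ({s : ℝ | max t0 s0 < s ∧ (Z s = Y s ∨ max (Z s) (Y s) = 2)} ∪ {2})

/-- The first meeting time `inf{s > s0 ∨ t0 : Z(s) = Y(s)}`, valued in `ℝ≥0∞`. -/
def besqMeet (t0 s0 : ℝ) (Y Z : ℝ → ℝ) : ℝ≥0∞ :=
  ⨅ s ∈ {s : ℝ | max t0 s0 < s ∧ Z s = Y s}, ENNReal.ofReal s

open Topology in
/-- Increment identity from the martingale problem. -/
theorem incr_eq {Ω : Type} [MeasureSpace Ω] [IsProbabilityMeasure (volume : Measure Ω)]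
    {t0 : ℝ} {F : ℝ → MeasurableSpace Ω} {Y : Ω → ℝ → ℝ} {f g : ℝ → ℝ}
    (hle : ∀ t, F t ≤ (inferInstance : MeasurableSpace Ω))
    (hYm : ∀ t : ℝ, Measurable fun ω => Y ω t)
    (hYc : ∀ᵐ ω ∂(volume : Measure Ω), ContinuousOn (Y ω) (Set.Ici t0))
    (hf : Continuous f) (hg : Continuous g) {K : ℝ} (hK : ∀ x, |f x| ≤ K)
    (hM : MartingaleFrom t0 F fun t ω => f (Y ω t) - ∫ s in Set.Ioc t0 t, g (Y ω s))
    {u v : ℝ} (hu : t0 ≤ u) (huv : u ≤ v) {A : Set Ω} (hA : MeasurableSet[F u] A) :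
    Integrable (fun ω => ∫ s in u..v, g (Y ω s)) (volume : Measure Ω) ∧
    (∫ ω in A, f (Y ω v)) - (∫ ω in A, f (Y ω u)) = ∫ ω in A, (∫ s in u..v, g (Y ω s)) := by
  obtain ⟨hI, hC⟩ := hM
  have hfI : ∀ t, Integrable (fun ω => f (Y ω t)) (volume : Measure Ω) := fun t =>
    Integrable.of_bound (hf.measurable.comp (hYm t)).aestronglyMeasurable K
      (Eventually.of_forall fun ω => hK _)
  have hJI : ∀ t, t0 ≤ t →
      Integrable (fun ω => ∫ s in Set.Ioc t0 t, g (Y ω s)) (volume : Measure Ω) := fun t ht => by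
    have := (hfI t).sub (hI t ht)
    refine this.congr (Eventually.of_forall fun ω => ?_)
    simp
  have hsplit : ∀ᵐ ω ∂(volume : Measure Ω), (∫ s in u..v, g (Y ω s)) =
      (∫ s in Set.Ioc t0 v, g (Y ω s)) - ∫ s in Set.Ioc t0 u, g (Y ω s) := by
    filter_upwards [hYc] with ω hω
    have hc : ContinuousOn (fun s => g (Y ω s)) (Set.Ici t0) := hg.comp_continuousOn hω
    have hInteg : ∀ a b, t0 ≤ a → a ≤ b → IntervalIntegrable (fun s => g (Y ω s)) volume a b := by
      intro a b ha hab
      apply ContinuousOn.intervalIntegrable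
      rw [Set.uIcc_of_le hab]
      exact hc.mono fun x hx => ha.trans hx.1
    rw [← intervalIntegral.integral_of_le (hu.trans huv), ← intervalIntegral.integral_of_le hu,
      ← intervalIntegral.integral_add_adjacent_intervals (hInteg t0 u le_rfl hu) (hInteg u v hu huv)]
    ring
  have hdI := (hJI v (hu.trans huv)).sub (hJI u hu)
  refine ⟨hdI.congr (hsplit.mono fun ω h => by simp [h]), ?_⟩
  have h1 := setIntegral_condExp (hle u) (hI v (hu.trans huv)) hA
  rw [setIntegral_congr_ae (hle u _ hA) ((hC u v hu huv).mono fun x hx _ => hx)] at h1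
  rw [integral_sub (hfI u).integrableOn (hJI u hu).integrableOn,
    integral_sub (hfI v).integrableOn (hJI v (hu.trans huv)).integrableOn] at h1
  rw [setIntegral_congr_ae (hle u _ hA) (hsplit.mono fun x hx _ => hx),
    integral_sub (hJI v (hu.trans huv)).integrableOn (hJI u hu).integrableOn]
  linarith

open Topology in
/-- Space-time subsolutions give a lower bound in conditional mean. -/
theorem base_step {Ω : Type} [MeasureSpace Ω] [IsProbabilityMeasure (volume : Measure Ω)]
    {t0 : ℝ} {F : ℝ → MeasurableSpace Ω} {Y : Ω → ℝ → ℝ}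
    (hmono : Monotone F) (hle : ∀ t, F t ≤ (inferInstance : MeasurableSpace Ω))
    (hYm : ∀ t : ℝ, Measurable fun ω => Y ω t)
    (hYc : ∀ᵐ ω ∂(volume : Measure Ω), ContinuousOn (Y ω) (Set.Ici t0))
    (w wt g : ℝ → ℝ → ℝ) {s t : ℝ} (hs : t0 ≤ s) (hst : s ≤ t) (lam K C : ℝ)
    (hw : Continuous (fun p : ℝ × ℝ => w p.1 p.2))
    (hg : ∀ u ∈ Set.Icc s t, Continuous (g u))
    (hgb : ∀ u ∈ Set.Icc s t, ∃ K', ∀ x, |g u x| ≤ K')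
    (hwb : ∀ u ∈ Set.Icc s t, ∀ x, |w u x| ≤ K)
    (hM : ∀ u ∈ Set.Icc s t,
      MartingaleFrom t0 F fun r ω => w u (Y ω r) - ∫ s in Set.Ioc t0 r, g u (Y ω s))
    (hwt : ∀ u x, Tendsto (fun p : ℝ × ℝ => (w p.1 p.2 - w u p.2) / (p.1 - u))
      (𝓝[>] u ×ˢ 𝓝 x) (𝓝 (wt u x)))
    (hlip : ∀ u ∈ Set.Icc s t, ∀ v ∈ Set.Icc s t, ∀ x, |w v x - w u x| ≤ C * |v - u|)
    (hineq : ∀ u ∈ Set.Icc s t, ∀ x, 0 ≤ lam * w u x + wt u x + g u x)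
    {A : Set Ω} (hA : MeasurableSet[F s] A) :
    Real.exp (-lam * (t - s)) * ∫ ω in A, w s (Y ω s) ≤ ∫ ω in A, w t (Y ω t) := by
  have hwc : ∀ u, Continuous (w u) := fun u => hw.comp (by fun_prop : Continuous fun x : ℝ => (u, x))
  have hC : 0 ≤ C ∨ s = t := by
    rcases eq_or_lt_of_le hst with h | h
    · exact Or.inr h
    · left
      have h1 := hlip s ⟨le_rfl, hst⟩ t ⟨hst, le_rfl⟩ 0
      have h2 := abs_nonneg (w t 0 - w s 0)
      have h3 : 0 < |t - s| := abs_pos.2 (by linarith)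
      by_contra hc
      push Not at hc
      nlinarith
  rcases hC with hC | hC
  swap
  · subst hC; simp
  have hcont : ContinuousOn (fun u => ∫ ω in A, w u (Y ω u)) (Set.Icc s t) := by
    refine continuousOn_of_dominated (bound := fun _ => K) ?_ ?_ (integrable_const _) ?_
    · intro u _
      exact ((hwc u).measurable.comp (hYm u)).aestronglyMeasurable
    · intro u hu
      exact Eventually.of_forall fun ω => hwb u hu _
    · filter_upwards [ae_restrict_of_ae hYc] with ω hω
      exact hw.comp_continuousOn (continuousOn_id.prodMk (hω.mono fun x hx => hs.trans hx.1))
  have hder : ∀ u ∈ Set.Ico s t, HasDerivWithinAt (fun u => ∫ ω in A, w u (Y ω u))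
      (∫ ω in A, (wt u (Y ω u) + g u (Y ω u))) (Set.Ici u) u := by
    intro u hu
    have hu' : u ∈ Set.Icc s t := ⟨hu.1, hu.2.le⟩
    have hAu : MeasurableSet[F u] A := hmono hu.1 _ hA
    obtain ⟨K', hK'⟩ := hgb u hu'
    rw [← hasDerivWithinAt_Ioi_iff_Ici, hasDerivWithinAt_iff_tendsto_slope' (by simp)]
    have hnear : ∀ᶠ v in 𝓝[>] u, u < v ∧ v ≤ t := by
      filter_upwards [Ioc_mem_nhdsGT hu.2] with v hv using hv
    have hinc := fun v (hv : u ≤ v) => incr_eq hle hYm hYc (hwc u) (hg u hu') (hwb u hu') (hM u hu')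
      (hs.trans hu.1) hv hAu
    have hT : Tendsto (fun v => ∫ ω in A, ((w v (Y ω v) - w u (Y ω v)) / (v - u)
        + (∫ r in u..v, g u (Y ω r)) / (v - u))) (𝓝[>] u)
        (𝓝 (∫ ω in A, (wt u (Y ω u) + g u (Y ω u)))) := by
      refine tendsto_integral_filter_of_dominated_convergence (fun _ => C + K') ?_ ?_
        (integrable_const _) ?_
      · filter_upwards [hnear] with v hv
        refine AEStronglyMeasurable.add ?_ ?_
        · exact (((((hwc v).measurable.comp (hYm v)).sub
            ((hwc u).measurable.comp (hYm v))).div_const _)).aestronglyMeasurable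
        · exact ((hinc v hv.1.le).1.div_const _).aestronglyMeasurable.restrict
      · filter_upwards [hnear] with v hv
        refine Eventually.of_forall fun ω => ?_
        have hpos : 0 < v - u := by linarith [hv.1]
        refine (norm_add_le _ _).trans (add_le_add ?_ ?_)
        · rw [Real.norm_eq_abs, abs_div, abs_of_pos hpos, div_le_iff₀ hpos]
          have := hlip u hu' v ⟨hu.1.trans hv.1.le, hv.2⟩ (Y ω v)
          rwa [abs_of_pos hpos] at this
        · rw [norm_div, Real.norm_eq_abs (v - u), abs_of_pos hpos, div_le_iff₀ hpos]
          have := intervalIntegral.norm_integral_le_of_norm_le_const (a := u) (b := v)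
            (f := fun r => g u (Y ω r)) (C := K') (fun r _ => hK' _)
          rwa [abs_of_pos hpos] at this
      · filter_upwards [ae_restrict_of_ae hYc] with ω hω
        have hcw : ContinuousWithinAt (Y ω) (Set.Ioi u) u :=
          (hω u (hs.trans hu.1)).mono fun x hx => (hs.trans hu.1).trans (le_of_lt hx)
        refine Tendsto.add ?_ ?_
        · exact (hwt u (Y ω u)).comp (tendsto_id.prodMk hcw)
        · have hc : ContinuousOn (fun r => g u (Y ω r)) (Set.Ici t0) :=
            (hg u hu').comp_continuousOn hω
          have hd : HasDerivWithinAt (fun v => ∫ r in u..v, g u (Y ω r)) (g u (Y ω u))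
              (Set.Ioi u) u := by
            apply HasDerivWithinAt.mono _ Set.Ioi_subset_Ici_self
            refine intervalIntegral.integral_hasDerivWithinAt_right (t := Set.Ioi u) (by simp)
              ?_ ?_
            · refine ⟨Set.Ioi u, self_mem_nhdsWithin, ?_⟩
              exact (hc.mono fun x hx => (hs.trans hu.1).trans (le_of_lt hx)).aestronglyMeasurable
                measurableSet_Ioi
            · exact (hg u hu').continuousAt.comp_continuousWithinAt hcw
          rw [hasDerivWithinAt_iff_tendsto_slope' (by simp)] at hd
          refine hd.congr fun v => ?_
          rw [slope_def_field]
          simp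
    refine hT.congr' ?_
    filter_upwards [hnear] with v hv
    have hpos : 0 < v - u := by linarith [hv.1]
    obtain ⟨hi, he⟩ := hinc v hv.1.le
    have hwI : ∀ r ∈ Set.Icc s t, ∀ q, Integrable (fun ω => w r (Y ω q)) (volume.restrict A) :=
      fun r hr q => Integrable.of_bound ((hwc r).measurable.comp (hYm q)).aestronglyMeasurable K
        (Eventually.of_forall fun ω => hwb r hr _)
    have hv' : v ∈ Set.Icc s t := ⟨hu.1.trans hv.1.le, hv.2⟩
    have hdd : Integrable (fun ω => (w v (Y ω v) - w u (Y ω v)) / (v - u)) (volume.restrict A) :=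
      ((hwI v hv' v).sub (hwI u hu' v)).div_const _
    rw [integral_add hdd (hi.integrableOn.div_const _),
      integral_div, integral_div, integral_sub (hwI v hv' v) (hwI u hu' v), ← he, slope_def_field]
    ring
  have hexp : ∀ u, HasDerivAt (fun u => Real.exp (lam * u)) (Real.exp (lam * u) * lam) u := by
    intro u
    have := ((hasDerivAt_id u).const_mul lam).exp
    simpa using this
  have key := image_le_of_deriv_right_le_deriv_boundary
    (f := fun _ => Real.exp (lam * s) * ∫ ω in A, w s (Y ω s)) (f' := fun _ => 0)
    (a := s) (b := t)
    (B := fun u => Real.exp (lam * u) * ∫ ω in A, w u (Y ω u))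
    (B' := fun u => Real.exp (lam * u) * lam * (∫ ω in A, w u (Y ω u)) +
      Real.exp (lam * u) * ∫ ω in A, (wt u (Y ω u) + g u (Y ω u)))
    continuousOn_const (fun _ _ => hasDerivWithinAt_const _ _ _) le_rfl
    ((by fun_prop : Continuous fun u => Real.exp (lam * u)).continuousOn.mul hcont)
    (fun u hu => (hexp u).hasDerivWithinAt.mul (hder u hu))
    (by
      intro u hu
      have hu' : u ∈ Set.Icc s t := ⟨hu.1, hu.2.le⟩
      have h1 : -(lam * ∫ ω in A, w u (Y ω u)) ≤ ∫ ω in A, (wt u (Y ω u) + g u (Y ω u)) := by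
        rw [← integral_const_mul, ← integral_neg]
        by_cases hI : Integrable (fun ω => wt u (Y ω u) + g u (Y ω u)) (volume.restrict A)
        · refine integral_mono ?_ hI ?_
          · exact (Integrable.of_bound ((hwc u).measurable.comp (hYm u)).aestronglyMeasurable K
              (Eventually.of_forall fun ω => hwb u hu' _)).const_mul lam |>.neg
          · intro ω
            have := hineq u hu' (Y ω u)
            simp only
            linarith
        · exfalso
          apply hI
          have hb : ∀ x, |wt u x| ≤ C := by
            intro x
            refine le_of_tendsto (hwt u x).abs ?_
            have : ∀ᶠ v in 𝓝[>] u, u < v ∧ v ≤ t := by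
              filter_upwards [Ioc_mem_nhdsGT hu.2] with v hv using hv
            filter_upwards [this.prod_inl (𝓝 x)] with p hp
            have hpos : 0 < p.1 - u := by linarith [hp.1]
            rw [abs_div, abs_of_pos hpos, div_le_iff₀ hpos]
            have := hlip u hu' p.1 ⟨hu.1.trans hp.1.le, hp.2⟩ p.2
            rwa [abs_of_pos hpos] at this
          have hmeas : Measurable (wt u) := by
            obtain ⟨v, hv1, hv2⟩ := exists_seq_strictAnti_tendsto u
            refine measurable_of_tendsto_metrizable (f := fun n x =>
              (w (v n) x - w u x) / (v n - u)) (fun n => ?_) ?_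
            · exact ((hwc (v n)).measurable.sub (hwc u).measurable).div_const _
            · rw [tendsto_pi_nhds]
              intro x
              have h2 : Tendsto v atTop (𝓝[>] u) :=
                tendsto_nhdsWithin_iff.2 ⟨hv2.2, Eventually.of_forall hv2.1⟩
              exact (hwt u x).comp (h2.prodMk tendsto_const_nhds)
          obtain ⟨K', hK'⟩ := hgb u hu'
          refine Integrable.add ?_ ?_
          · exact Integrable.of_bound (hmeas.comp (hYm u)).aestronglyMeasurable C
              (Eventually.of_forall fun ω => hb _)
          · exact Integrable.of_bound ((hg u hu').measurable.comp (hYm u)).aestronglyMeasurable K'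
              (Eventually.of_forall fun ω => hK' _)
      have h2 := Real.exp_pos (lam * u)
      nlinarith)
  have h := key ⟨hst, le_rfl⟩
  have e : Real.exp (-lam * (t - s)) = Real.exp (lam * s) / Real.exp (lam * t) := by
    rw [← Real.exp_sub]; congr 1; ring
  rw [e, div_mul_eq_mul_div, div_le_iff₀ (Real.exp_pos _)]
  linarith

theorem hasDerivAt_pos_pow (n : ℕ) (y : ℝ) :
    HasDerivAt (fun y : ℝ => (max y 0) ^ (n + 2)) (((n + 2 : ℕ) : ℝ) * (max y 0) ^ (n + 1)) y := by
  rcases lt_trichotomy y 0 with h | h | h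
  · have h1 : HasDerivAt (fun _ : ℝ => (0 : ℝ)) 0 y := hasDerivAt_const _ _
    rw [max_eq_right h.le]
    simp only [ne_eq, Nat.add_eq_zero_iff, one_ne_zero, and_false, not_false_eq_true, zero_pow,
      mul_zero]
    refine h1.congr_of_eventuallyEq ?_
    filter_upwards [Iio_mem_nhds h] with z hz
    rw [max_eq_right (le_of_lt hz)]
    simp
  · subst h
    simp only [max_self, ne_eq, Nat.add_eq_zero_iff, one_ne_zero, and_false, not_false_eq_true,
      zero_pow, mul_zero]
    rw [hasDerivAt_iff_isLittleO]
    simp only [max_self, ne_eq, Nat.add_eq_zero_iff, OfNat.ofNat_ne_zero, and_false,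
      not_false_eq_true, zero_pow, sub_zero, smul_eq_mul, mul_zero]
    have h2 : (fun z : ℝ => (max z 0) ^ (n + 2)) =O[nhds 0] fun z : ℝ => z ^ (n + 2) := by
      refine Asymptotics.IsBigO.of_bound 1 (Eventually.of_forall fun z => ?_)
      rw [one_mul, norm_pow, norm_pow]
      refine pow_le_pow_left₀ (norm_nonneg _) ?_ _
      rw [Real.norm_eq_abs, Real.norm_eq_abs, abs_of_nonneg (le_max_right _ _)]
      exact max_le (le_abs_self _) (abs_nonneg _)
    have h3 : (fun z : ℝ => z ^ (n + 2)) =o[nhds 0] fun z : ℝ => z := by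
      simpa using Asymptotics.isLittleO_pow_pow (𝕜 := ℝ) (m := 1) (n := n + 2) (by omega)
    exact h2.trans_isLittleO h3
  · have h1 := hasDerivAt_pow (n + 2) y
    rw [max_eq_left h.le]
    refine h1.congr_of_eventuallyEq ?_
    filter_upwards [Ioi_mem_nhds h] with z hz
    rw [max_eq_left (le_of_lt hz)]

/-- The bump function with support `[a, b]`. -/
def bump (a b x : ℝ) : ℝ := (max ((x - a) * (b - x)) 0) ^ 3

theorem quad_deriv (a b x : ℝ) : HasDerivAt (fun x => (x - a) * (b - x)) (a + b - 2 * x) x := by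
  have := ((hasDerivAt_id x).sub_const a).mul ((hasDerivAt_id x).const_sub b)
  refine this.congr_deriv ?_
  simp only [id]
  ring

theorem bump_deriv (a b x : ℝ) :
    HasDerivAt (bump a b) (3 * (max ((x - a) * (b - x)) 0) ^ 2 * (a + b - 2 * x)) x := by
  have := (hasDerivAt_pos_pow 1 ((x - a) * (b - x))).comp x (quad_deriv a b x)
  exact this.congr_deriv (by norm_num)

theorem bump_deriv2 (a b x : ℝ) :
    HasDerivAt (fun x => 3 * (max ((x - a) * (b - x)) 0) ^ 2 * (a + b - 2 * x))
      (6 * (max ((x - a) * (b - x)) 0) * (a + b - 2 * x) ^ 2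
        - 6 * (max ((x - a) * (b - x)) 0) ^ 2) x := by
  have h1 := (hasDerivAt_pos_pow 0 ((x - a) * (b - x))).comp x (quad_deriv a b x)
  have h2 : HasDerivAt (fun x => a + b - 2 * x) (-2) x := by
    have := ((hasDerivAt_id x).const_mul 2).const_sub (a + b)
    exact this.congr_deriv (by norm_num)
  have := (h1.const_mul 3).mul h2
  refine this.congr_deriv ?_
  simp only [Function.comp]
  norm_num
  ring

theorem deriv_bump (a b : ℝ) :
    deriv (bump a b) = fun x => 3 * (max ((x - a) * (b - x)) 0) ^ 2 * (a + b - 2 * x) :=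
  funext fun x => (bump_deriv a b x).deriv

theorem iter_bump (a b : ℝ) :
    iteratedDeriv 2 (bump a b) = fun x => 6 * (max ((x - a) * (b - x)) 0) * (a + b - 2 * x) ^ 2
        - 6 * (max ((x - a) * (b - x)) 0) ^ 2 := by
  rw [iteratedDeriv_succ, iteratedDeriv_one, deriv_bump]
  exact funext fun x => (bump_deriv2 a b x).deriv

theorem contDiff_bump (a b : ℝ) : ContDiff ℝ 2 (bump a b) := by
  rw [show (2 : WithTop ℕ∞) = 1 + 1 by norm_num, contDiff_succ_iff_deriv]
  refine ⟨fun x => (bump_deriv a b x).differentiableAt, by simp, ?_⟩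
  rw [contDiff_one_iff_deriv, deriv_bump]
  refine ⟨fun x => (bump_deriv2 a b x).differentiableAt, ?_⟩
  have : deriv (fun x => 3 * (max ((x - a) * (b - x)) 0) ^ 2 * (a + b - 2 * x)) =
     fun x => 6 * (max ((x - a) * (b - x)) 0) * (a + b - 2 * x) ^ 2
        - 6 * (max ((x - a) * (b - x)) 0) ^ 2 := funext fun x => (bump_deriv2 a b x).deriv
  rw [this]
  fun_prop

theorem quad_nonpos {a b x : ℝ} (hab : a ≤ b) (hx : x ≤ a ∨ b ≤ x) :
    max ((x - a) * (b - x)) 0 = 0 := by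
  refine max_eq_right ?_
  rcases hx with h | h <;> nlinarith

theorem bump_pos {a b x : ℝ} (hab : a ≤ b) (h : 0 < bump a b x) : a < x ∧ x < b := by
  by_contra hc
  have : x ≤ a ∨ b ≤ x := by
    by_contra h2
    push Not at h2
    exact hc h2
  rw [bump, quad_nonpos hab this] at h
  simp at h

theorem bump_nonneg (a b x : ℝ) : 0 ≤ bump a b x := pow_nonneg (le_max_right _ _) _

theorem compact_bump {a b : ℝ} (hab : a ≤ b) : HasCompactSupport (bump a b) := by
  refine HasCompactSupport.intro (isCompact_Icc (a := a) (b := b)) fun x hx => ?_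
  have : x ≤ a ∨ b ≤ x := by
    by_contra h2
    push Not at h2
    exact hx ⟨h2.1.le, h2.2.le⟩
  rw [bump, quad_nonpos hab this]
  simp

/-- The generator applied to the bump. -/
def gen (a b x : ℝ) : ℝ :=
  2 * deriv (bump a b) x + 4 * max x 0 / 2 * iteratedDeriv 2 (bump a b) x

theorem gen_eq (a b x : ℝ) : gen a b x =
    2 * (3 * (max ((x - a) * (b - x)) 0) ^ 2 * (a + b - 2 * x)) +
     4 * max x 0 / 2 * (6 * (max ((x - a) * (b - x)) 0) * (a + b - 2 * x) ^ 2
        - 6 * (max ((x - a) * (b - x)) 0) ^ 2) := by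
  rw [gen, deriv_bump, iter_bump]

theorem gen_cont (a b : ℝ) : Continuous (gen a b) := by
  have : gen a b = _ := funext fun x => gen_eq a b x
  rw [this]
  fun_prop

theorem gen_bdd {a b : ℝ} (hab : a ≤ b) : ∃ K, ∀ x, |gen a b x| ≤ K := by
  have hc : HasCompactSupport (gen a b) := by
    refine HasCompactSupport.intro (isCompact_Icc (a := a) (b := b)) fun x hx => ?_
    have : x ≤ a ∨ b ≤ x := by
      by_contra h2
      push Not at h2
      exact hx ⟨h2.1.le, h2.2.le⟩
    rw [gen_eq, quad_nonpos hab this]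
    simp
  exact hc.exists_bound_of_continuous (gen_cont a b)

theorem key_alg (p r x va vb : ℝ) (hp : 0 < p) (hr : 0 < r) (hg1 : 9 / 20 ≤ p + r)
    (hg2 : p + r ≤ 7 / 4) (hxr1 : 1 / 5 ≤ x + r) (hxr2 : x + r ≤ 3 / 2)
    (hva : va ≤ 1) (hvb : -(13 / 5) ≤ vb) :
    0 ≤ 100000 * (p * r) ^ 2 + 3 * (p * r) * (-va * r + vb * p + 2 * (r - p) - 4 * max x 0)
      + 12 * max x 0 * (r - p) ^ 2 := by
  have hpr : 0 < p * r := mul_pos hp hr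
  have hB : r - 23 / 5 * p - 4 * max x 0 ≤ -va * r + vb * p + 2 * (r - p) - 4 * max x 0 := by
    nlinarith
  have hX0 : 0 ≤ max x 0 := le_max_right _ _
  have hXx : x ≤ max x 0 := le_max_left _ _
  have hX2 : max x 0 ≤ 3 / 2 := max_le (by linarith) (by norm_num)
  generalize max x 0 = X at *
  suffices h : 0 ≤ 100000 * (p * r) ^ 2 + 3 * (p * r) * (r - 23 / 5 * p - 4 * X)
      + 12 * X * (r - p) ^ 2 by nlinarith
  by_cases h1 : 23 / 5 * p ≤ r
  · have e1 : 0 ≤ 3 * (p * r) * (r - 23 / 5 * p) := by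
      apply mul_nonneg (by positivity); linarith
    have e2 : 0 ≤ 12 * X * ((r - p) ^ 2 - p * r) := by
      apply mul_nonneg (by positivity)
      nlinarith
    nlinarith [sq_nonneg (p * r)]
  push Not at h1
  have hp2 : 2 / 25 ≤ p := by linarith
  by_cases h2 : r ≤ 1 / 100
  · have hX1 : 19 / 100 ≤ X := by linarith
    have hp3 : 44 / 100 ≤ p := by linarith
    have e1 : 0 ≤ p * r * r := by positivity
    have e2 : p * r * p ≤ p * p / 100 := by nlinarith
    have e3 : 9 / 10 * (p * p) ≤ (r - p) ^ 2 - p * r := by nlinarith [mul_nonneg hp.le (by linarith : 0 ≤ p / 44 - r)]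
    have e4 : X * (9 / 10 * (p * p)) ≤ X * ((r - p) ^ 2 - p * r) :=
      mul_le_mul_of_nonneg_left e3 hX0
    have e5 : 19 / 100 * (p * p) ≤ X * (p * p) := by nlinarith
    nlinarith [sq_nonneg (p * r)]
  · push Not at h2
    have e1 : 8 / 10000 ≤ p * r := by nlinarith
    have e2 : 80 ≤ 100000 * (p * r) := by linarith
    have e3 : 0 ≤ p * r * (100000 * (p * r) + 3 * (r - 23 / 5 * p - 4 * X)) := by
      apply mul_nonneg hpr.le; linarith
    have e4 : 0 ≤ 12 * X * (r - p) ^ 2 := by positivity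
    nlinarith

theorem bump_ineq (a b x va vb : ℝ) (hg : 9 / 20 ≤ b - a)
    (ha : -(1 / 4) ≤ a) (hb1 : 1 / 5 ≤ b) (hb2 : b ≤ 3 / 2)
    (hva : va ≤ 1) (hvb : -(13 / 5) ≤ vb) :
    0 ≤ 100000 * bump a b x +
      3 * (max ((x - a) * (b - x)) 0) ^ 2 * (-va * (b - x) + vb * (x - a)) + gen a b x := by
  rw [gen_eq, bump]
  by_cases hx : x ≤ a ∨ b ≤ x
  · rw [quad_nonpos (by linarith) hx]; simp
  push Not at hx
  have hp : 0 < x - a := by linarith [hx.1]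
  have hr : 0 < b - x := by linarith [hx.2]
  have h := key_alg (x - a) (b - x) x va vb hp hr (by linarith) (by linarith) (by linarith)
    (by linarith) hva hvb
  rw [max_eq_left (mul_pos hp hr).le]
  have h2 := mul_nonneg (mul_pos hp hr).le h
  refine h2.trans (le_of_eq ?_)
  ring

theorem bump_le {a b : ℝ} (x : ℝ) (hab : a ≤ b) (ha : -(1 / 4) ≤ a) (hb2 : b ≤ 3 / 2) :
    bump a b x ≤ 64 := by
  have h0 : 0 ≤ max ((x - a) * (b - x)) 0 := le_max_right _ _
  have : max ((x - a) * (b - x)) 0 ≤ 4 := by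
    refine max_le ?_ (by norm_num)
    nlinarith [sq_nonneg (x - a - (b - x))]
  calc bump a b x ≤ 4 ^ 3 := pow_le_pow_left₀ h0 this 3
    _ = 64 := by norm_num

theorem cube_lip (A B : ℝ) (hA : A ≤ 4) (hB : B ≤ 4) :
    |(max A 0) ^ 3 - (max B 0) ^ 3| ≤ 48 * |A - B| := by
  have h1 : |max A 0 - max B 0| ≤ |A - B| := abs_max_sub_max_le_abs A B 0
  have hm : max A 0 ≤ 4 := max_le hA (by norm_num)
  have hn : max B 0 ≤ 4 := max_le hB (by norm_num)
  have hm0 : 0 ≤ max A 0 := le_max_right _ _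
  have hn0 : 0 ≤ max B 0 := le_max_right _ _
  generalize max A 0 = m at *
  generalize max B 0 = n at *
  rw [show m ^ 3 - n ^ 3 = (m ^ 2 + m * n + n ^ 2) * (m - n) by ring, abs_mul,
    abs_of_nonneg (by positivity)]
  have : m ^ 2 + m * n + n ^ 2 ≤ 48 := by nlinarith
  exact mul_le_mul this h1 (abs_nonneg _) (by norm_num)

theorem bump_lip {a b a' b' : ℝ} (x d : ℝ) (hab : a ≤ b) (ha : -(1 / 4) ≤ a) (hb2 : b ≤ 3 / 2)
    (hab' : a' ≤ b') (ha' : -(1 / 4) ≤ a') (hb2' : b' ≤ 3 / 2)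
    (h1 : |a' - a| ≤ d) (h2 : |b' - b| ≤ 13 / 5 * d) :
    |bump a' b' x - bump a b x| ≤ 400 * d := by
  have hd : 0 ≤ d := (abs_nonneg _).trans h1
  by_cases hx : x ≤ -(1 / 4) ∨ 3 / 2 ≤ x
  · have e1 : x ≤ a ∨ b ≤ x := hx.imp (fun h => h.trans ha) fun h => hb2.trans h
    have e2 : x ≤ a' ∨ b' ≤ x := hx.imp (fun h => h.trans ha') fun h => hb2'.trans h
    rw [bump, bump, quad_nonpos hab e1, quad_nonpos hab' e2]
    simpa using hd
  push Not at hx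
  refine (cube_lip _ _ (by nlinarith [sq_nonneg (x - a' - (b' - x))])
    (by nlinarith [sq_nonneg (x - a - (b - x))])).trans ?_
  have : |(x - a') * (b' - x) - (x - a) * (b - x)| ≤ 8 * d := by
    rw [show (x - a') * (b' - x) - (x - a) * (b - x) =
      -((a' - a) * (b' - x)) + (x - a) * (b' - b) by ring]
    refine (abs_add_le _ _).trans ?_
    rw [abs_neg, abs_mul, abs_mul]
    have e1 : |b' - x| ≤ 7 / 4 := abs_le.2 ⟨by linarith, by linarith⟩
    have e2 : |x - a| ≤ 7 / 4 := abs_le.2 ⟨by linarith, by linarith⟩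
    have e3 := mul_le_mul h1 e1 (abs_nonneg _) hd
    have e4 := mul_le_mul e2 h2 (abs_nonneg _) (by norm_num)
    linarith
  linarith

open Topology in
theorem bump_time (s a0 va b0 vb u x : ℝ) :
    Tendsto (fun p : ℝ × ℝ =>
      (bump (a0 + va * (p.1 - s)) (b0 + vb * (p.1 - s)) p.2
        - bump (a0 + va * (u - s)) (b0 + vb * (u - s)) p.2) / (p.1 - u))
      (𝓝[>] u ×ˢ 𝓝 x)
      (𝓝 (3 * (max ((x - (a0 + va * (u - s))) * ((b0 + vb * (u - s)) - x)) 0) ^ 2 *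
        (-va * ((b0 + vb * (u - s)) - x) + vb * (x - (a0 + va * (u - s)))))) := by
  set a := a0 + va * (u - s) with ha
  set b := b0 + vb * (u - s) with hb
  have hfst : Tendsto (fun p : ℝ × ℝ => p.1) (𝓝[>] u ×ˢ 𝓝 x) (𝓝 u) :=
    tendsto_fst.mono_right nhdsWithin_le_nhds
  have hsnd : Tendsto (fun p : ℝ × ℝ => p.2) (𝓝[>] u ×ˢ 𝓝 x) (𝓝 x) := tendsto_snd
  have hcont : ContDiff ℝ 1 (fun y : ℝ => (max y 0) ^ 3) := by
    rw [contDiff_one_iff_deriv]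
    have : deriv (fun y : ℝ => (max y 0) ^ 3) = fun y => ((1 + 2 : ℕ) : ℝ) * (max y 0) ^ (1 + 1) :=
      funext fun y => (hasDerivAt_pos_pow 1 y).deriv
    refine ⟨fun y => (hasDerivAt_pos_pow 1 y).differentiableAt, ?_⟩
    rw [this]; fun_prop
  have hstrict := (hcont.contDiffAt (x := (x - a) * (b - x))).hasStrictDerivAt' 
    (hasDerivAt_pos_pow 1 _) (by norm_num)
  -- the two arguments
  set P : ℝ × ℝ → ℝ := fun p => (p.2 - (a0 + va * (p.1 - s))) * ((b0 + vb * (p.1 - s)) - p.2)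
  set Q : ℝ × ℝ → ℝ := fun p => (p.2 - a) * (b - p.2)
  set D : ℝ × ℝ → ℝ := fun p => -va * ((b0 + vb * (p.1 - s)) - p.2) + vb * (p.2 - a)
  have hPQ : ∀ p, P p - Q p = (p.1 - u) * D p := by
    intro p
    simp only [P, Q, D, ha, hb]
    ring
  have hD : Tendsto D (𝓝[>] u ×ˢ 𝓝 x) (𝓝 (-va * (b - x) + vb * (x - a))) := by
    have hc : Continuous D := by fun_prop
    exact (hc.tendsto (u, x)).comp (hfst.prodMk_nhds hsnd)
  have hP : Tendsto P (𝓝[>] u ×ˢ 𝓝 x) (𝓝 ((x - a) * (b - x))) := by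
    have hc : Continuous P := by fun_prop
    exact (hc.tendsto (u, x)).comp (hfst.prodMk_nhds hsnd)
  have hQ : Tendsto Q (𝓝[>] u ×ˢ 𝓝 x) (𝓝 ((x - a) * (b - x))) := by
    have hc : Continuous Q := by fun_prop
    exact (hc.tendsto (u, x)).comp (hfst.prodMk_nhds hsnd)
  have ho := hstrict.isLittleO.comp_tendsto (hP.prodMk_nhds hQ)
  have hO : ((fun p : ℝ × ℝ => p.1 - p.2) ∘ fun p => (P p, Q p)) =O[𝓝[>] u ×ˢ 𝓝 x]
      fun p => p.1 - u := by
    have h1 : D =O[𝓝[>] u ×ˢ 𝓝 x] (fun _ => (1 : ℝ)) := hD.isBigO_one ℝ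
    have h2 := (Asymptotics.isBigO_refl (fun p : ℝ × ℝ => p.1 - u) (𝓝[>] u ×ˢ 𝓝 x)).mul h1
    simp only [mul_one] at h2
    refine h2.congr_left fun p => ?_
    simp [hPQ]
  have hz := (ho.trans_isBigO hO).tendsto_div_nhds_zero
  have hfin := hz.add (hD.const_mul (3 * (max ((x - a) * (b - x)) 0) ^ 2))
  rw [zero_add] at hfin
  refine hfin.congr' ?_
  have hne : ∀ᶠ p in 𝓝[>] u ×ˢ 𝓝 x, u < p.1 := by
    have : ∀ᶠ v in 𝓝[>] u, u < v := self_mem_nhdsWithin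
    exact this.prod_inl _
  filter_upwards [hne] with p hp
  have hp' : p.1 - u ≠ 0 := by linarith
  simp only [Function.comp, bump]
  have e := hPQ p
  simp only [P, Q] at e
  field_simp
  simp only [ContinuousLinearMap.toSpanSingleton_apply, smul_eq_mul, P, Q]
  rw [e, mul_comm (p.1 - s) vb]
  norm_num
  ring

/-- Data of a solution to the martingale problem, with explicit filtration. -/
structure Sol {Ω : Type} [MeasureSpace Ω] (t0 : ℝ) (F : ℝ → MeasurableSpace Ω)
    (Y : Ω → ℝ → ℝ) : Prop where
  mono : Monotone F
  le : ∀ t, F t ≤ (inferInstance : MeasurableSpace Ω)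
  meas : ∀ t : ℝ, Measurable fun ω => Y ω t
  cont : ∀ᵐ ω ∂(volume : Measure Ω), ContinuousOn (Y ω) (Set.Ici t0)
  adapted : ∀ t : ℝ, t0 ≤ t → @Measurable Ω ℝ (F t) _ fun ω => Y ω t
  mart : ∀ a b : ℝ, a ≤ b →
    MartingaleFrom t0 F fun t ω => bump a b (Y ω t) - ∫ s in Set.Ioc t0 t, gen a b (Y ω s)

theorem bump_continuous (a b : ℝ) : Continuous (bump a b) := (contDiff_bump a b).continuous

section phase

variable {Ω : Type} [MeasureSpace Ω] [IsProbabilityMeasure (volume : Measure Ω)]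
    {t0 : ℝ} {F : ℝ → MeasurableSpace Ω} {Y : Ω → ℝ → ℝ}

theorem one_step (H : Sol t0 F Y) {s t a0 va b0 vb : ℝ} (hs : t0 ≤ s)
    (hva : |va| ≤ 1) (hvb : |vb| ≤ 13 / 5)
    (hc : ∀ u ∈ Set.Icc s t, -(1 / 4) ≤ a0 + va * (u - s) ∧ 1 / 5 ≤ b0 + vb * (u - s) ∧
      b0 + vb * (u - s) ≤ 3 / 2 ∧ 9 / 20 ≤ b0 + vb * (u - s) - (a0 + va * (u - s)))
    {u v : ℝ} (hu : s ≤ u) (huv : u ≤ v) (hv : v ≤ t) {A : Set Ω} (hA : MeasurableSet[F u] A) :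
    Real.exp (-100000 * (v - u)) *
      ∫ ω in A, bump (a0 + va * (u - s)) (b0 + vb * (u - s)) (Y ω u) ≤
      ∫ ω in A, bump (a0 + va * (v - s)) (b0 + vb * (v - s)) (Y ω v) := by
  have hsub : ∀ r ∈ Set.Icc u v, r ∈ Set.Icc s t := fun r hr => ⟨hu.trans hr.1, hr.2.trans hv⟩
  refine base_step H.mono H.le H.meas H.cont
    (fun r x => bump (a0 + va * (r - s)) (b0 + vb * (r - s)) x)
    (fun r x => 3 * (max ((x - (a0 + va * (r - s))) * ((b0 + vb * (r - s)) - x)) 0) ^ 2 *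
        (-va * ((b0 + vb * (r - s)) - x) + vb * (x - (a0 + va * (r - s)))))
    (fun r x => gen (a0 + va * (r - s)) (b0 + vb * (r - s)) x)
    (hs.trans hu) huv 100000 64 400 ?_ (fun r _ => gen_cont _ _) ?_ ?_ ?_ ?_ ?_ ?_ hA
  · unfold bump
    fun_prop
  · intro r hr
    obtain ⟨h1, h2, h3, h4⟩ := hc r (hsub r hr)
    exact gen_bdd (by linarith)
  · intro r hr x
    obtain ⟨h1, h2, h3, h4⟩ := hc r (hsub r hr)
    rw [abs_of_nonneg (bump_nonneg _ _ _)]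
    exact bump_le x (by linarith) h1 h3
  · intro r hr
    obtain ⟨h1, h2, h3, h4⟩ := hc r (hsub r hr)
    exact H.mart _ _ (by linarith)
  · intro r x
    exact bump_time s a0 va b0 vb r x
  · intro r hr r' hr' x
    obtain ⟨h1, h2, h3, h4⟩ := hc r (hsub r hr)
    obtain ⟨h1', h2', h3', h4'⟩ := hc r' (hsub r' hr')
    refine bump_lip x |r' - r| (by linarith) h1 h3 (by linarith) h1' h3' ?_ ?_
    · rw [show a0 + va * (r' - s) - (a0 + va * (r - s)) = va * (r' - r) by ring, abs_mul]
      exact mul_le_of_le_one_left (abs_nonneg _) hva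
    · rw [show b0 + vb * (r' - s) - (b0 + vb * (r - s)) = vb * (r' - r) by ring, abs_mul]
      exact mul_le_mul_of_nonneg_right hvb (abs_nonneg _)
  · intro r hr x
    obtain ⟨h1, h2, h3, h4⟩ := hc r (hsub r hr)
    exact bump_ineq _ _ x va vb h4 h1 h2 h3 (abs_le.1 hva).2 (abs_le.1 hvb).1

theorem finset_step (H : Sol t0 F Y) {s t a0 va b0 vb : ℝ} (hs : t0 ≤ s)
    (hva : |va| ≤ 1) (hvb : |vb| ≤ 13 / 5)
    (hc : ∀ u ∈ Set.Icc s t, -(1 / 4) ≤ a0 + va * (u - s) ∧ 1 / 5 ≤ b0 + vb * (u - s) ∧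
      b0 + vb * (u - s) ≤ 3 / 2 ∧ 9 / 20 ≤ b0 + vb * (u - s) - (a0 + va * (u - s)))
    {A : Set Ω} (hA : MeasurableSet[F s] A) (S : Finset ℝ) :
    ∀ v, s ≤ v → v ≤ t → (∀ u ∈ S, s ≤ u ∧ u ≤ v) →
      MeasurableSet[F v] (A ∩ {ω | ∀ u ∈ S, Y ω u ≤ 3 / 2}) ∧
      Real.exp (-100000 * (v - s)) *
        ∫ ω in A, bump (a0 + va * (s - s)) (b0 + vb * (s - s)) (Y ω s) ≤
      ∫ ω in A ∩ {ω | ∀ u ∈ S, Y ω u ≤ 3 / 2},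
        bump (a0 + va * (v - s)) (b0 + vb * (v - s)) (Y ω v) := by
  classical
  induction S using Finset.induction_on_max with
  | empty =>
    intro v h1 h2 _
    have e : (A ∩ {ω | ∀ u ∈ (∅ : Finset ℝ), Y ω u ≤ 3 / 2}) = A := by simp
    rw [e]
    exact ⟨H.mono h1 _ hA, one_step H hs hva hvb hc le_rfl h1 h2 hA⟩
  | insert m S hm ih =>
    intro v h1 h2 hS
    obtain ⟨hm1, hm2⟩ := hS m (by simp)
    obtain ⟨ih1, ih2⟩ := ih m hm1 (hm2.trans h2)
      fun u hu => ⟨(hS u (by simp [hu])).1, (hm u hu).le⟩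
    have e : (A ∩ {ω | ∀ u ∈ insert m S, Y ω u ≤ 3 / 2}) =
        (A ∩ {ω | ∀ u ∈ S, Y ω u ≤ 3 / 2}) ∩ {ω | Y ω m ≤ 3 / 2} := by
      ext ω
      simp only [Finset.mem_insert, forall_eq_or_imp, Set.mem_inter_iff, Set.mem_setOf_eq]
      tauto
    have hB : MeasurableSet[F m] {ω | Y ω m ≤ 3 / 2} :=
      (H.adapted m (hs.trans hm1)) measurableSet_Iic
    have hAB : MeasurableSet[F m] ((A ∩ {ω | ∀ u ∈ S, Y ω u ≤ 3 / 2}) ∩ {ω | Y ω m ≤ 3 / 2}) :=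
      @MeasurableSet.inter _ (F m) _ _ ih1 hB
    rw [e]
    refine ⟨H.mono hm2 _ hAB, ?_⟩
    have hstep := one_step H hs hva hvb hc hm1 hm2 h2 hAB
    have heq : ∫ ω in (A ∩ {ω | ∀ u ∈ S, Y ω u ≤ 3 / 2}) ∩ {ω | Y ω m ≤ 3 / 2},
        bump (a0 + va * (m - s)) (b0 + vb * (m - s)) (Y ω m) =
        ∫ ω in (A ∩ {ω | ∀ u ∈ S, Y ω u ≤ 3 / 2}),
        bump (a0 + va * (m - s)) (b0 + vb * (m - s)) (Y ω m) := by
      symm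
      refine setIntegral_eq_of_subset_of_forall_diff_eq_zero (H.le m _ ih1)
        Set.inter_subset_left ?_
      rintro ω ⟨h3, h4⟩
      have h5 : 3 / 2 < Y ω m := by
        by_contra h6
        push Not at h6
        exact h4 ⟨h3, h6⟩
      obtain ⟨g1, g2, g3, g4⟩ := hc m ⟨hm1, hm2.trans h2⟩
      rw [bump, quad_nonpos (by linarith) (Or.inr (by linarith))]
      simp
    rw [heq] at hstep
    refine le_trans ?_ hstep
    rw [show -100000 * (v - s) = -100000 * (v - m) + -100000 * (m - s) by ring, Real.exp_add,
      mul_assoc]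
    exact mul_le_mul_of_nonneg_left ih2 (Real.exp_pos _).le

theorem bump_integrable (H : Sol t0 F Y) {a b : ℝ} (hab : a ≤ b) (ha : -(1 / 4) ≤ a)
    (hb : b ≤ 3 / 2) (t : ℝ) : Integrable (fun ω => bump a b (Y ω t)) (volume : Measure Ω) :=
  Integrable.of_bound ((bump_continuous a b).measurable.comp (H.meas t)).aestronglyMeasurable 64
    (Eventually.of_forall fun ω => by
      rw [Real.norm_eq_abs, abs_of_nonneg (bump_nonneg _ _ _)]
      exact bump_le _ hab ha hb)

theorem phase (H : Sol t0 F Y) {s t a0 va b0 vb : ℝ} (hs : t0 ≤ s) (hst : s ≤ t)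
    (hva : |va| ≤ 1) (hvb : |vb| ≤ 13 / 5)
    (hc : ∀ u ∈ Set.Icc s t, -(1 / 4) ≤ a0 + va * (u - s) ∧ 1 / 5 ≤ b0 + vb * (u - s) ∧
      b0 + vb * (u - s) ≤ 3 / 2 ∧ 9 / 20 ≤ b0 + vb * (u - s) - (a0 + va * (u - s)))
    {a1 b1 : ℝ} (ha1 : a0 + va * (t - s) = a1) (hb1 : b0 + vb * (t - s) = b1)
    {A : Set Ω} (hA : MeasurableSet[F s] A) :
    ∃ A' ⊆ A, MeasurableSet[F t] A' ∧
      (∀ ω ∈ A', (∀ q : ℚ, s ≤ q → (q : ℝ) ≤ t → Y ω q ≤ 3 / 2) ∧ a1 < Y ω t ∧ Y ω t < b1) ∧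
      Real.exp (-100000 * (t - s)) * ∫ ω in A, bump a0 b0 (Y ω s) ≤
        ∫ ω in A', bump a1 b1 (Y ω t) := by
  classical
  subst ha1 hb1
  obtain ⟨e, he⟩ := exists_surjective_nat ℚ
  set a1 := a0 + va * (t - s)
  set b1 := b0 + vb * (t - s)
  obtain ⟨g1, g2, g3, g4⟩ := hc t ⟨hst, le_rfl⟩
  have hab1 : a1 ≤ b1 := by simp only [a1, b1]; linarith
  set S : ℕ → Finset ℝ := fun n =>
    ((Finset.range n).image fun i => ((e i : ℚ) : ℝ)).filter fun u => s ≤ u ∧ u ≤ t with hS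
  set B : ℕ → Set Ω := fun n => A ∩ {ω | ∀ u ∈ S n, Y ω u ≤ 3 / 2} with hB
  have hfs := fun n => finset_step H hs hva hvb hc hA (S n) t hst le_rfl
    (fun u hu => (Finset.mem_filter.1 hu).2)
  have hanti : Antitone B := by
    intro n k hnk ω hω
    refine ⟨hω.1, fun u hu => hω.2 u ?_⟩
    simp only [hS, Finset.mem_filter, Finset.mem_image, Finset.mem_range] at hu ⊢
    obtain ⟨⟨i, hi, hi2⟩, h⟩ := hu
    exact ⟨⟨i, lt_of_lt_of_le hi hnk, hi2⟩, h⟩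
  have hInteg := bump_integrable H hab1 g1 g3 t
  have hlim := tendsto_setIntegral_of_antitone (μ := (volume : Measure Ω))
    (f := fun ω => bump a1 b1 (Y ω t)) (s := B)
    (fun n => H.le t _ (hfs n).1) hanti ⟨0, hInteg.integrableOn⟩
  have hge := ge_of_tendsto' hlim fun n => (hfs n).2
  have hBm : MeasurableSet[F t] (⋂ n, B n) := @MeasurableSet.iInter _ _ (F t) _ _ fun n => (hfs n).1
  have hPm : MeasurableSet[F t] {ω | 0 < bump a1 b1 (Y ω t)} := by
    have : @Measurable Ω ℝ (F t) _ fun ω => bump a1 b1 (Y ω t) :=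
      (bump_continuous a1 b1).measurable.comp (H.adapted t (hs.trans hst))
    exact this measurableSet_Ioi
  refine ⟨(⋂ n, B n) ∩ {ω | 0 < bump a1 b1 (Y ω t)}, ?_, @MeasurableSet.inter _ (F t) _ _ hBm hPm,
    ?_, ?_⟩
  · intro ω hω
    exact (Set.mem_iInter.1 hω.1 0).1
  · rintro ω ⟨h1, h2⟩
    refine ⟨fun q hq1 hq2 => ?_, bump_pos hab1 h2⟩
    obtain ⟨i, rfl⟩ := he q
    refine (Set.mem_iInter.1 h1 (i + 1)).2 _ ?_
    simp only [hS, Finset.mem_filter, Finset.mem_image, Finset.mem_range]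
    exact ⟨⟨i, by omega, rfl⟩, hq1, hq2⟩
  · have heq : ∫ ω in (⋂ n, B n) ∩ {ω | 0 < bump a1 b1 (Y ω t)}, bump a1 b1 (Y ω t) =
        ∫ ω in (⋂ n, B n), bump a1 b1 (Y ω t) := by
      symm
      refine setIntegral_eq_of_subset_of_forall_diff_eq_zero (H.le t _ hBm)
        Set.inter_subset_left ?_
      rintro ω ⟨h3, h4⟩
      refine le_antisymm ?_ (bump_nonneg _ _ _)
      by_contra h6
      push Not at h6
      exact h4 ⟨h3, h6⟩
    rw [heq]
    simpa using hge

/-- Final measure bound. -/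
theorem measure_ge (H : Sol t0 F Y) {a b t : ℝ} (hab : a ≤ b) (ha : -(1 / 4) ≤ a)
    (hb : b ≤ 3 / 2) {A E : Set Ω} (hA : MeasurableSet A) (hAE : A ⊆ E) {c : ℝ}
    (hc : c ≤ ∫ ω in A, bump a b (Y ω t)) : ENNReal.ofReal (c / 64) ≤ volume E := by
  refine le_trans ?_ (measure_mono hAE)
  have h1 : ∫ ω in A, bump a b (Y ω t) ≤ ∫ ω in A, (64 : ℝ) :=
    integral_mono (bump_integrable H hab ha hb t).integrableOn (integrable_const _)
      fun ω => bump_le _ hab ha hb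
  rw [setIntegral_const, smul_eq_mul] at h1
  refine ENNReal.ofReal_le_of_le_toReal ?_
  change c / 64 ≤ (volume : Measure Ω).real A
  linarith

end phase

/-- The lower bound for one process. -/
def cst : ℝ := Real.exp (-200000) / 512

theorem start_bound {Ω : Type} [MeasureSpace Ω] [IsProbabilityMeasure (volume : Measure Ω)]
    {t0 y0 : ℝ} {Y : Ω → ℝ → ℝ} (hy : y0 ∈ Set.Icc (0 : ℝ) 1)
    (h0 : ∀ᵐ ω ∂(volume : Measure Ω), Y ω t0 = y0) :
    1 / 512 ≤ ∫ ω in Set.univ, bump (-(1 / 4)) (3 / 2) (Y ω t0) := by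
  have : ∫ ω in Set.univ, bump (-(1 / 4)) (3 / 2) (Y ω t0) =
      ∫ _ω : Ω, bump (-(1 / 4)) (3 / 2) y0 := by
    rw [setIntegral_univ]
    refine integral_congr_ae ?_
    filter_upwards [h0] with ω h
    rw [h]
  rw [this]
  simp only [integral_const, probReal_univ, smul_eq_mul, one_mul]
  have h1 : (1 : ℝ) / 8 ≤ max ((y0 - -(1 / 4)) * (3 / 2 - y0)) 0 := by
    refine le_max_of_le_left ?_
    nlinarith [hy.1, hy.2, mul_nonneg hy.1 (sub_nonneg.2 hy.2)]
  calc (1 : ℝ) / 512 = (1 / 8) ^ 3 := by norm_num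
    _ ≤ _ := pow_le_pow_left₀ (by norm_num) h1 3

theorem sol_of {Ω : Type} [MeasureSpace Ω] [IsProbabilityMeasure (volume : Measure Ω)]
    {t0 y0 : ℝ} {Y : Ω → ℝ → ℝ}
    (h : IsDiffusionFrom t0 (fun _ _ => 2) (fun _ x => 4 * max x 0) y0 Y) :
    ∃ F, Sol t0 F Y := by
  obtain ⟨h1, h2, F, h3, h4, h5, h6⟩ := h
  exact ⟨F, h3, h4, h1, h2.mono fun ω h => h.1, h5,
    fun a b hab => h6 (bump a b) (contDiff_bump a b) (compact_bump hab)⟩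

theorem two_phase {Ω : Type} [MeasureSpace Ω] [IsProbabilityMeasure (volume : Measure Ω)]
    {t0 y0 : ℝ} {Y : Ω → ℝ → ℝ} (hy : y0 ∈ Set.Icc (0 : ℝ) 1) (ht : t0 ∈ Set.Icc (0 : ℝ) 1)
    (h : IsDiffusionFrom t0 (fun _ _ => 2) (fun _ x => 4 * max x 0) y0 Y)
    {a1 b1 a2 b2 va vb va' vb' : ℝ}
    (hva : |va| ≤ 1) (hvb : |vb| ≤ 13 / 5) (hva' : |va'| ≤ 1) (hvb' : |vb'| ≤ 13 / 5)
    (e1 : -(1 / 4) + va / 2 = a1) (e2 : 3 / 2 + vb / 2 = b1)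
    (e3 : a1 + va' / 2 = a2) (e4 : b1 + vb' / 2 = b2)
    (hc : ∀ u ∈ Set.Icc (1 : ℝ) (3 / 2), -(1 / 4) ≤ -(1 / 4) + va * (u - 1) ∧
      1 / 5 ≤ 3 / 2 + vb * (u - 1) ∧
      3 / 2 + vb * (u - 1) ≤ 3 / 2 ∧ 9 / 20 ≤ 3 / 2 + vb * (u - 1) - (-(1 / 4) + va * (u - 1)))
    (hc' : ∀ u ∈ Set.Icc (3 / 2 : ℝ) 2, -(1 / 4) ≤ a1 + va' * (u - 3 / 2) ∧
      1 / 5 ≤ b1 + vb' * (u - 3 / 2) ∧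
      b1 + vb' * (u - 3 / 2) ≤ 3 / 2 ∧
      9 / 20 ≤ b1 + vb' * (u - 3 / 2) - (a1 + va' * (u - 3 / 2))) :
    ENNReal.ofReal (cst / 64) ≤ volume {ω | (∀ q : ℚ, t0 ≤ q → (q : ℝ) ≤ 2 → Y ω q ≤ 3 / 2) ∧
      (a1 < Y ω (3 / 2) ∧ Y ω (3 / 2) < b1) ∧ (a2 < Y ω 2 ∧ Y ω 2 < b2)} := by
  have h0 : ∀ᵐ ω ∂(volume : Measure Ω), Y ω t0 = y0 := h.2.1.mono fun ω h => h.2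
  obtain ⟨F, H⟩ := sol_of h
  obtain ⟨A1, -, m1, p1, i1⟩ := phase H (s := t0) (t := 1) (a0 := -(1 / 4)) (va := 0) (b0 := 3 / 2)
    (vb := 0) le_rfl ht.2 (by norm_num) (by norm_num) (fun u _ => by norm_num) (a1 := -(1 / 4))
    (b1 := 3 / 2) (by ring) (by ring) (A := Set.univ) (@MeasurableSet.univ _ (F t0))
  obtain ⟨A2, s2, m2, p2, i2⟩ := phase H (s := 1) (t := 3 / 2) (a0 := -(1 / 4)) (b0 := 3 / 2)
    ht.2 (by norm_num) hva hvb hc (a1 := a1) (b1 := b1) (by rw [← e1]; ring)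
    (by rw [← e2]; ring) m1
  obtain ⟨A3, s3, m3, p3, i3⟩ := phase H (s := 3 / 2) (t := 2) (a0 := a1) (b0 := b1)
    (by linarith [ht.2]) (by norm_num) hva' hvb' hc' (a1 := a2) (b1 := b2) (by rw [← e3]; ring)
    (by rw [← e4]; ring) m2
  have hc2 := hc' 2 (by norm_num)
  have ea : a1 + va' * (2 - 3 / 2) = a2 := by rw [← e3]; ring
  have eb : b1 + vb' * (2 - 3 / 2) = b2 := by rw [← e4]; ring
  rw [ea, eb] at hc2
  refine measure_ge H (a := a2) (b := b2) (t := 2) (by linarith [hc2.2.2.2]) hc2.1 hc2.2.2.1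
    (H.le 2 _ m3) ?_ ?_
  · intro ω hω
    have hω2 := s3 hω
    have hω1 := s2 hω2
    refine ⟨fun q hq1 hq2 => ?_, (p2 ω hω2).2, (p3 ω hω).2⟩
    rcases le_total (q : ℝ) 1 with h | h
    · exact (p1 ω hω1).1 q hq1 h
    rcases le_total (q : ℝ) (3 / 2) with h' | h'
    · exact (p2 ω hω2).1 q h h'
    · exact (p3 ω hω).1 q h' hq2
  · have i0 := start_bound hy h0
    have q1 := (mul_le_mul_of_nonneg_left i0 (Real.exp_pos (-100000 * (1 - t0))).le).trans i1
    have q2 := (mul_le_mul_of_nonneg_left q1 (Real.exp_pos (-100000 * (3 / 2 - 1))).le).trans i2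
    have q3 := (mul_le_mul_of_nonneg_left q2 (Real.exp_pos (-100000 * (2 - 3 / 2))).le).trans i3
    refine le_trans ?_ q3
    rw [← mul_assoc, ← mul_assoc, ← Real.exp_add, ← Real.exp_add, cst, div_eq_mul_one_div]
    refine mul_le_mul_of_nonneg_right (Real.exp_le_exp.2 ?_) (by norm_num)
    linarith [ht.1]

theorem up_bound {Ω : Type} [MeasureSpace Ω] [IsProbabilityMeasure (volume : Measure Ω)]
    {t0 y0 : ℝ} {Y : Ω → ℝ → ℝ} (hy : y0 ∈ Set.Icc (0 : ℝ) 1) (ht : t0 ∈ Set.Icc (0 : ℝ) 1)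
    (h : IsDiffusionFrom t0 (fun _ _ => 2) (fun _ x => 4 * max x 0) y0 Y) :
    ENNReal.ofReal (cst / 64) ≤ volume {ω | (∀ q : ℚ, t0 ≤ q → (q : ℝ) ≤ 2 → Y ω q ≤ 3 / 2) ∧
      (-(1 / 4) < Y ω (3 / 2) ∧ Y ω (3 / 2) < 1 / 5) ∧ (1 / 4 < Y ω 2 ∧ Y ω 2 < 3 / 2)} := by
  refine two_phase hy ht h (va := 0) (vb := -(13 / 5)) (va' := 1) (vb' := 13 / 5)
    (by norm_num) (by norm_num [abs_of_pos]) (by norm_num) (by norm_num [abs_of_pos]) (by norm_num) (by norm_num) (by norm_num)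
    (by norm_num) ?_ ?_
  · rintro u ⟨h1, h2⟩
    refine ⟨?_, ?_, ?_, ?_⟩ <;> linarith
  · rintro u ⟨h1, h2⟩
    refine ⟨?_, ?_, ?_, ?_⟩ <;> linarith

theorem down_bound {Ω : Type} [MeasureSpace Ω] [IsProbabilityMeasure (volume : Measure Ω)]
    {t0 y0 : ℝ} {Y : Ω → ℝ → ℝ} (hy : y0 ∈ Set.Icc (0 : ℝ) 1) (ht : t0 ∈ Set.Icc (0 : ℝ) 1)
    (h : IsDiffusionFrom t0 (fun _ _ => 2) (fun _ x => 4 * max x 0) y0 Y) :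
    ENNReal.ofReal (cst / 64) ≤ volume {ω | (∀ q : ℚ, t0 ≤ q → (q : ℝ) ≤ 2 → Y ω q ≤ 3 / 2) ∧
      (1 / 4 < Y ω (3 / 2) ∧ Y ω (3 / 2) < 3 / 2) ∧ (-(1 / 4) < Y ω 2 ∧ Y ω 2 < 1 / 5)} := by
  refine two_phase hy ht h (va := 1) (vb := 0) (va' := -1) (vb' := -(13 / 5))
    (by norm_num) (by norm_num) (by norm_num) (by norm_num [abs_of_pos]) (by norm_num) (by norm_num) (by norm_num)
    (by norm_num) ?_ ?_
  · rintro u ⟨h1, h2⟩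
    refine ⟨?_, ?_, ?_, ?_⟩ <;> linarith
  · rintro u ⟨h1, h2⟩
    refine ⟨?_, ?_, ?_, ?_⟩ <;> linarith

/-- A path bounded at rational times is bounded. -/
theorem path_le {Y : ℝ → ℝ} {t0 m : ℝ} (hm : t0 ≤ m) (hc : ContinuousOn Y (Set.Ici t0))
    (hq : ∀ q : ℚ, t0 ≤ q → (q : ℝ) ≤ 2 → Y q ≤ 3 / 2) {s : ℝ} (h1 : m < s) (h2 : s ≤ 2) :
    Y s ≤ 3 / 2 := by
  by_contra hcon
  push Not at hcon
  have hcw : ContinuousWithinAt Y (Set.Ici t0) s := hc s (hm.trans h1.le)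
  have hca : ContinuousAt Y s := hcw.continuousAt (Ici_mem_nhds (lt_of_le_of_lt hm h1))
  have hev : ∀ᶠ r in nhds s, 3 / 2 < Y r := hca.eventually (lt_mem_nhds hcon)
  obtain ⟨l, hl, hl2⟩ := exists_Ioc_subset_of_mem_nhds hev ⟨s - 1, by linarith⟩
  obtain ⟨q, hq1, hq2⟩ := exists_rat_btwn (max_lt hl h1)
  have h3 := hl2 ⟨(le_max_left _ _).trans_lt hq1, hq2.le⟩
  have h4 := hq q (hm.trans ((le_max_right _ _).trans hq1.le)) (hq2.le.trans h2)
  have h5 : 3 / 2 < Y q := h3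
  linarith

/-- Deterministic part. -/
theorem path_meet {Y Z : ℝ → ℝ} {t0 s0 : ℝ} (ht : t0 ∈ Set.Icc (0 : ℝ) 1)
    (hs : s0 ∈ Set.Icc (0 : ℝ) 1)
    (hY : ContinuousOn Y (Set.Ici t0)) (hZ : ContinuousOn Z (Set.Ici s0))
    (hYq : ∀ q : ℚ, t0 ≤ q → (q : ℝ) ≤ 2 → Y q ≤ 3 / 2)
    (hZq : ∀ q : ℚ, s0 ≤ q → (q : ℝ) ≤ 2 → Z q ≤ 3 / 2)
    (h1 : Y (3 / 2) ≤ Z (3 / 2)) (h2 : Z 2 < Y 2) :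
    ENNReal.ofReal (besqSigma t0 s0 Y Z) = besqMeet t0 s0 Y Z := by
  have hm1 : max t0 s0 ≤ 1 := max_le ht.2 hs.2
  have hm0 : 0 ≤ max t0 s0 := ht.1.trans (le_max_left _ _)
  -- a meeting point
  obtain ⟨r, hr, hr0⟩ : ∃ r ∈ Set.Icc (3 / 2 : ℝ) 2, Y r - Z r = 0 := by
    have hc : ContinuousOn (fun r => Y r - Z r) (Set.Icc (3 / 2 : ℝ) 2) :=
      (hY.mono fun x hx => by
        have := hx.1
        exact ht.2.trans (by linarith)).sub (hZ.mono fun x hx => by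
        have := hx.1
        exact hs.2.trans (by linarith))
    exact intermediate_value_Icc (by norm_num) hc ⟨by linarith, by linarith⟩
  have hrm : max t0 s0 < r := by linarith [hr.1]
  set S1 : Set ℝ := {s : ℝ | max t0 s0 < s ∧ Z s = Y s} with hS1
  have hrS : r ∈ S1 := ⟨hrm, by linarith⟩
  have hbd : BddBelow S1 := ⟨0, fun x hx => hm0.trans hx.1.le⟩
  have hsig : besqSigma t0 s0 Y Z = sInf S1 := by
    unfold besqSigma
    have hbd2 : BddBelow ({s : ℝ | max t0 s0 < s ∧ (Z s = Y s ∨ max (Z s) (Y s) = 2)} ∪ {2}) := by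
      refine ⟨0, ?_⟩
      rintro x (hx | hx)
      · exact hm0.trans hx.1.le
      · rw [hx]; norm_num
    apply le_antisymm
    · exact csInf_le_csInf hbd2 ⟨r, hrS⟩ fun x hx => Or.inl ⟨hx.1, Or.inl hx.2⟩
    · refine le_csInf ⟨2, Or.inr rfl⟩ ?_
      have hI2 : sInf S1 ≤ 2 := (csInf_le hbd hrS).trans hr.2
      rintro x (⟨hx1, hx2 | hx2⟩ | hx)
      · exact csInf_le hbd ⟨hx1, hx2⟩
      · refine hI2.trans ?_
        by_contra hlt
        push Not at hlt
        have e1 := path_le (le_max_left t0 s0) hY hYq hx1 hlt.le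
        have e2 := path_le (le_max_right t0 s0) hZ hZq hx1 hlt.le
        have := max_le e2 e1
        rw [hx2] at this
        norm_num at this
      · rw [hx]; exact hI2
  rw [hsig, besqMeet]
  apply le_antisymm
  · refine le_iInf₂ fun x hx => ENNReal.ofReal_le_ofReal (csInf_le hbd hx)
  · refine le_of_forall_gt fun c hc => ?_
    by_cases hct : c = ⊤
    · subst hct
      exact lt_of_le_of_lt (iInf₂_le r hrS) ENNReal.ofReal_lt_top
    have hlt : sInf S1 < c.toReal := by
      rw [← ENNReal.ofReal_toReal hct] at hc
      exact (ENNReal.ofReal_lt_ofReal_iff_of_nonneg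
        (le_csInf ⟨r, hrS⟩ fun x hx => hm0.trans hx.1.le)).1 hc
    obtain ⟨x, hx, hxc⟩ := exists_lt_of_csInf_lt ⟨r, hrS⟩ hlt
    refine lt_of_le_of_lt (iInf₂_le x hx) ?_
    rw [← ENNReal.ofReal_toReal hct]
    exact (ENNReal.ofReal_lt_ofReal_iff_of_nonneg (hm0.trans hx.1.le)).2 hxc

theorem meas_event (t0 a1 b1 a2 b2 : ℝ) :
    MeasurableSet {y : ℝ → ℝ | (∀ q : ℚ, t0 ≤ q → (q : ℝ) ≤ 2 → y q ≤ 3 / 2) ∧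
      (a1 < y (3 / 2) ∧ y (3 / 2) < b1) ∧ (a2 < y 2 ∧ y 2 < b2)} := by
  have hp : ∀ t : ℝ, Measurable fun y : ℝ → ℝ => y t := fun t => measurable_pi_apply t
  refine MeasurableSet.inter ?_ (MeasurableSet.inter ?_ ?_)
  · have : {y : ℝ → ℝ | ∀ q : ℚ, t0 ≤ q → (q : ℝ) ≤ 2 → y q ≤ 3 / 2} =
        ⋂ q : ℚ, ⋂ (_ : t0 ≤ q), ⋂ (_ : (q : ℝ) ≤ 2), {y | y q ≤ 3 / 2} := by
      ext y; simp
    change MeasurableSet {y : ℝ → ℝ | ∀ q : ℚ, t0 ≤ q → (q : ℝ) ≤ 2 → y q ≤ 3 / 2}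
    rw [this]
    exact MeasurableSet.iInter fun q => MeasurableSet.iInter fun _ => MeasurableSet.iInter fun _ =>
      hp q measurableSet_Iic
  · exact hp (3 / 2) measurableSet_Ioo
  · exact hp 2 measurableSet_Ioo

/-- Two independent `BESQ²` processes started at space-time points in `[0,1]²`
meet before either exceeds level `2` and before time `2` with probability bounded below
uniformly in the starting data. -/
theorem statement5 :
    ∃ c : ℝ, 0 < c ∧
      ∀ y0 t0 z0 s0 : ℝ, y0 ∈ Set.Icc (0:ℝ) 1 → t0 ∈ Set.Icc (0:ℝ) 1 →
        z0 ∈ Set.Icc (0:ℝ) 1 → s0 ∈ Set.Icc (0:ℝ) 1 →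
      ∀ (Ω : Type) [MeasureSpace Ω] [IsProbabilityMeasure (volume : Measure Ω)],
      ∀ Y Z : Ω → ℝ → ℝ,
        IsDiffusionFrom t0 (fun _ _ => 2) (fun _ x => 4 * max x 0) y0 Y →
        IsDiffusionFrom s0 (fun _ _ => 2) (fun _ x => 4 * max x 0) z0 Z →
        IndepFun (fun ω => (fun t => Y ω t)) (fun ω => (fun t => Z ω t)) (volume : Measure Ω) →
        ENNReal.ofReal c ≤
          volume {ω | ENNReal.ofReal (besqSigma t0 s0 (Y ω) (Z ω))
            = besqMeet t0 s0 (Y ω) (Z ω)} := by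
  refine ⟨cst / 64 * (cst / 64), ?_, ?_⟩
  · have : 0 < cst := div_pos (Real.exp_pos _) (by norm_num)
    positivity
  intro y0 t0 z0 s0 hy ht hz hs Ω _ _ Y Z hY hZ hind
  have hYu := up_bound hy ht hY
  have hZd := down_bound hz hs hZ
  have hcst : 0 ≤ cst / 64 := (div_pos (div_pos (Real.exp_pos _) (by norm_num)) (by norm_num)).le
  have hprod := hind.measure_inter_preimage_eq_mul _ _
    (meas_event t0 (-(1 / 4)) (1 / 5) (1 / 4) (3 / 2))
    (meas_event s0 (1 / 4) (3 / 2) (-(1 / 4)) (1 / 5))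
  rw [ENNReal.ofReal_mul hcst]
  refine (mul_le_mul' hYu hZd).trans (hprod.symm.le.trans ?_)
  refine measure_mono_ae ?_
  filter_upwards [hY.2.1, hZ.2.1] with ω h1 h2 h3
  obtain ⟨h4, h5⟩ := h3
  exact path_meet ht hs h1.1 h2.1 h4.1 h5.1 (by linarith [h4.2.1.2, h5.2.1.1])
    (by linarith [h4.2.2.1, h5.2.2.2])

end Paper
end
end

section
/- Let Y solve dY(t) = D(t)dt + √(ν(Y(t))₊)dB(t) on [0,T] with Y(0)=y ∈ (0,T], where ν > 0 and D : [0,T] → ℝ is a piecewise constant non-random function bounded above by d > 0. Then there exist constants C, c > 0 depending only on d and ν (not on y or T) such that P(sup_{t≤T} Y(t) ≥ xT) ≤ C e^{−cx} for all x ≥ 0. -/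
open MeasureTheory ProbabilityTheory Filter
open scoped ENNReal NNReal

noncomputable section

namespace Paper

/-- `D` is a piecewise constant (non-random) function on `[u, v]`. -/
def PiecewiseConstantOn (D : ℝ → ℝ) (u v : ℝ) : Prop :=
  ∃ (n : ℕ) (t : Fin (n + 1) → ℝ) (c : Fin n → ℝ),
    Monotone t ∧ t 0 = u ∧ t (Fin.last n) = v ∧
    ∀ i : Fin n, ∀ x ∈ Set.Ico (t i.castSucc) (t i.succ), D x = c i

lemma hasDerivAt_maxpow (n : ℕ) (z : ℝ) :
    HasDerivAt (fun z : ℝ => (max z 0) ^ (n + 2)) ((n + 2 : ℝ) * (max z 0) ^ (n + 1)) z := by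
  have hp : HasDerivAt (fun z : ℝ => z ^ (n + 2)) ((n + 2 : ℝ) * z ^ (n + 1)) z := by
    have := hasDerivAt_pow (n + 2) z
    simpa using this
  rcases lt_trichotomy z 0 with hz | hz | hz
  · rw [max_eq_right hz.le]
    have : HasDerivAt (fun _ : ℝ => (0 : ℝ)) 0 z := hasDerivAt_const _ _
    simp only [ne_eq, Nat.add_eq_zero_iff, one_ne_zero, and_false, not_false_eq_true, zero_pow, mul_zero]
    refine this.congr_of_eventuallyEq ?_
    filter_upwards [eventually_lt_nhds hz] with a ha
    simp [max_eq_right ha.le]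
  · subst hz
    simp only [max_self, ne_eq, Nat.add_eq_zero_iff, one_ne_zero, and_false, not_false_eq_true, zero_pow, mul_zero] at hp ⊢
    rw [← hasDerivWithinAt_univ, ← Set.Iic_union_Ici (a := (0 : ℝ))]
    refine HasDerivWithinAt.union ?_ ?_
    · refine (hasDerivWithinAt_const (0 : ℝ) (Set.Iic 0) (0 : ℝ)).congr ?_ (by simp)
      intro a ha
      simp [max_eq_right (Set.mem_Iic.1 ha)]
    · refine hp.hasDerivWithinAt.congr ?_ (by simp)
      intro a ha
      simp [max_eq_left (Set.mem_Ici.1 ha)]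
  · rw [max_eq_left hz.le]
    refine hp.congr_of_eventuallyEq ?_
    filter_upwards [eventually_gt_nhds hz] with a ha
    simp [max_eq_left (le_of_lt ha)]

/-- Smoothed positive part. -/
def psi (ε T x : ℝ) : ℝ := T * Real.log (1 + Real.exp (x / T)) - ε * x
/-- Its first derivative. -/
def psi1 (ε T x : ℝ) : ℝ := Real.exp (x / T) / (1 + Real.exp (x / T)) - ε
/-- Its second derivative. -/
def psi2 (T x : ℝ) : ℝ := Real.exp (x / T) / (T * (1 + Real.exp (x / T)) ^ 2)

lemma hasDerivAt_psi (ε : ℝ) {T : ℝ} (hT : 0 < T) (x : ℝ) :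
    HasDerivAt (psi ε T) (psi1 ε T x) x := by
  have h0 : HasDerivAt (fun x : ℝ => x / T) (1 / T) x := (hasDerivAt_id x).div_const T
  have h1 : HasDerivAt (fun x : ℝ => 1 + Real.exp (x / T)) (Real.exp (x / T) * (1 / T)) x :=
    h0.exp.const_add 1
  have hpos : 0 < 1 + Real.exp (x / T) := by positivity
  have h2 := ((h1.log hpos.ne').const_mul T).sub ((hasDerivAt_id x).const_mul ε)
  refine h2.congr_deriv ?_
  unfold psi1
  field_simp

lemma hasDerivAt_psi1 (ε : ℝ) {T : ℝ} (hT : 0 < T) (x : ℝ) :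
    HasDerivAt (psi1 ε T) (psi2 T x) x := by
  have h0 : HasDerivAt (fun x : ℝ => x / T) (1 / T) x := (hasDerivAt_id x).div_const T
  have h1 : HasDerivAt (fun x : ℝ => 1 + Real.exp (x / T)) (Real.exp (x / T) * (1 / T)) x :=
    h0.exp.const_add 1
  have hpos : 0 < 1 + Real.exp (x / T) := by positivity
  have h2 := (h0.exp.div h1 hpos.ne').sub_const ε
  refine h2.congr_deriv ?_
  unfold psi2
  field_simp
  ring

lemma continuous_psi2 {T : ℝ} (hT : 0 < T) : Continuous (psi2 T) := by
  unfold psi2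
  refine Continuous.div (by fun_prop) (by fun_prop) ?_
  intro x; positivity

lemma psi_ge (ε : ℝ) {T : ℝ} (hT : 0 < T) (x : ℝ) :
    (1 - ε) * x ≤ psi ε T x ∧ -(ε * x) ≤ psi ε T x := by
  have h1 : x / T ≤ Real.log (1 + Real.exp (x / T)) := by
    rw [Real.le_log_iff_exp_le (by positivity)]; linarith
  have h2 : 0 ≤ Real.log (1 + Real.exp (x / T)) :=
    Real.log_nonneg (by linarith [Real.exp_pos (x / T)])
  have h3 : x ≤ T * Real.log (1 + Real.exp (x / T)) := by
    rw [div_le_iff₀ hT] at h1; linarith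
  have h4 : 0 ≤ T * Real.log (1 + Real.exp (x / T)) := by positivity
  unfold psi
  constructor <;> linarith

lemma psi_bounds {ε T : ℝ} (hT : 0 < T) (hε : 0 < ε) (hε2 : ε ≤ 1 / 2) (x : ℝ) :
    0 ≤ psi ε T x ∧ x / 2 ≤ psi ε T x ∧ -ε ≤ psi1 ε T x ∧ psi1 ε T x ≤ 1 ∧ 0 ≤ psi2 T x ∧
    max x 0 * psi2 T x ≤ 1 ∧ max x 0 * psi1 ε T x ^ 2 ≤ 2 * psi ε T x := by
  obtain ⟨h1, h2⟩ := psi_ge ε hT x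
  have hp0 : 0 ≤ psi ε T x := by
    rcases le_total 0 x with hx | hx <;> nlinarith
  have hph : x / 2 ≤ psi ε T x := by
    rcases le_total 0 x with hx | hx <;> nlinarith
  have hE : 0 < Real.exp (x / T) := Real.exp_pos _
  have ha : 0 ≤ Real.exp (x / T) / (1 + Real.exp (x / T)) := by positivity
  have hb : Real.exp (x / T) / (1 + Real.exp (x / T)) ≤ 1 := by
    rw [div_le_one (by positivity)]; linarith
  have h1l : -ε ≤ psi1 ε T x := by unfold psi1; linarith
  have h1u : psi1 ε T x ≤ 1 := by unfold psi1; linarith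
  have h20 : 0 ≤ psi2 T x := by unfold psi2; positivity
  refine ⟨hp0, hph, h1l, h1u, h20, ?_, ?_⟩
  · rcases le_total x 0 with hx | hx
    · rw [max_eq_right hx]; simp
    · rw [max_eq_left hx]
      unfold psi2
      have h5 : x / T ≤ Real.exp (x / T) := by linarith [Real.add_one_le_exp (x / T)]
      have h6 : x * (Real.exp (x / T) / (T * (1 + Real.exp (x / T)) ^ 2))
          = (x / T) * Real.exp (x / T) / (1 + Real.exp (x / T)) ^ 2 := by
        field_simp
      rw [h6, div_le_one (by positivity)]
      nlinarith
  · rcases le_total x 0 with hx | hx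
    · rw [max_eq_right hx]; simp; exact hp0
    · rw [max_eq_left hx]
      have : psi1 ε T x ^ 2 ≤ 1 := by nlinarith
      nlinarith

/-- exponent -/
def ww (ν K ε T t x : ℝ) : ℝ := (1 / T) * Real.exp (-(ν / T) * t) * psi ε T x - K / T * t
def wwt (ν K ε T t x : ℝ) : ℝ :=
  -(ν / T) * ((1 / T) * Real.exp (-(ν / T) * t)) * psi ε T x - K / T
/-- exponential supersolution -/
def vv (ν K ε T l t x : ℝ) : ℝ := Real.exp (ww ν K ε T t x - l)
/-- The truncated test function. -/
def ff (ν K ε T l t x : ℝ) : ℝ := (max (1 - vv ν K ε T l t x) 0) ^ 3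
def fft (ν K ε T l t x : ℝ) : ℝ :=
  3 * (max (1 - vv ν K ε T l t x) 0) ^ 2 * (-(vv ν K ε T l t x * wwt ν K ε T t x))
def ffx (ν K ε T l t x : ℝ) : ℝ :=
  3 * (max (1 - vv ν K ε T l t x) 0) ^ 2 *
    (-(vv ν K ε T l t x * ((1 / T) * Real.exp (-(ν / T) * t) * psi1 ε T x)))
def ffxx (ν K ε T l t x : ℝ) : ℝ :=
  6 * (max (1 - vv ν K ε T l t x) 0) *
    (vv ν K ε T l t x * ((1 / T) * Real.exp (-(ν / T) * t) * psi1 ε T x)) ^ 2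
  - 3 * (max (1 - vv ν K ε T l t x) 0) ^ 2 * (vv ν K ε T l t x *
    (((1 / T) * Real.exp (-(ν / T) * t) * psi1 ε T x) ^ 2 +
      (1 / T) * Real.exp (-(ν / T) * t) * psi2 T x))

lemma hasDerivAt_vv_x (ν K ε l t : ℝ) {T : ℝ} (hT : 0 < T) (x : ℝ) :
    HasDerivAt (fun x => vv ν K ε T l t x)
      (vv ν K ε T l t x * ((1 / T) * Real.exp (-(ν / T) * t) * psi1 ε T x)) x := by
  have := ((((hasDerivAt_psi ε hT x).const_mul
    ((1 / T) * Real.exp (-(ν / T) * t))).sub_const (K / T * t)).sub_const l).exp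
  exact this

lemma hasDerivAt_ff_x (ν K ε l t : ℝ) {T : ℝ} (hT : 0 < T) (x : ℝ) :
    HasDerivAt (fun x => ff ν K ε T l t x) (ffx ν K ε T l t x) x := by
  have h := (hasDerivAt_vv_x ν K ε l t hT x).const_sub 1
  have h2 := (hasDerivAt_maxpow 1 (1 - vv ν K ε T l t x)).comp x h
  refine h2.congr_deriv ?_
  unfold ffx; norm_num

lemma hasDerivAt_ff_xx (ν K ε l t : ℝ) {T : ℝ} (hT : 0 < T) (x : ℝ) :
    HasDerivAt (fun x => ffx ν K ε T l t x) (ffxx ν K ε T l t x) x := by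
  have h := (hasDerivAt_vv_x ν K ε l t hT x).const_sub 1
  have h2 := ((hasDerivAt_maxpow 0 (1 - vv ν K ε T l t x)).comp x h).const_mul 3
  have h3 := ((hasDerivAt_vv_x ν K ε l t hT x).mul
    ((hasDerivAt_psi1 ε hT x).const_mul ((1 / T) * Real.exp (-(ν / T) * t)))).neg
  refine (h2.mul h3).congr_deriv ?_
  unfold ffxx
  simp only [Pi.neg_apply, Pi.mul_apply, Function.comp_apply]
  norm_num
  ring

lemma hasDerivAt_ff_t (ν K ε l x T t : ℝ) :
    HasDerivAt (fun t => ff ν K ε T l t x) (fft ν K ε T l t x) t := by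
  have h0 : HasDerivAt (fun t : ℝ => -(ν / T) * t) (-(ν / T)) t := by
    simpa using (hasDerivAt_id t).const_mul (-(ν / T))
  have h1 := (((h0.exp.const_mul (1 / T)).mul_const (psi ε T x)).sub
    ((hasDerivAt_id t).const_mul (K / T))).sub_const l
  have hv : HasDerivAt (fun t => vv ν K ε T l t x) (vv ν K ε T l t x * wwt ν K ε T t x) t := by
    refine h1.exp.congr_deriv ?_
    simp only [Pi.sub_apply, id]
    unfold vv ww wwt
    ring
  have h2 := (hasDerivAt_maxpow 1 (1 - vv ν K ε T l t x)).comp t (hv.const_sub 1)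
  refine h2.congr_deriv ?_
  unfold fft; norm_num

lemma cont_psi (ε : ℝ) {T : ℝ} (hT : 0 < T) : Continuous (psi ε T) :=
  continuous_iff_continuousAt.2 fun x => (hasDerivAt_psi ε hT x).continuousAt

lemma cont_psi1 (ε : ℝ) {T : ℝ} (hT : 0 < T) : Continuous (psi1 ε T) :=
  continuous_iff_continuousAt.2 fun x => (hasDerivAt_psi1 ε hT x).continuousAt

lemma cont_vv (ν K ε l : ℝ) {T : ℝ} (hT : 0 < T) :
    Continuous (fun p : ℝ × ℝ => vv ν K ε T l p.1 p.2) := by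
  have := cont_psi ε hT
  unfold vv ww
  fun_prop

lemma cont_fft (ν K ε l : ℝ) {T : ℝ} (hT : 0 < T) :
    Continuous (fun p : ℝ × ℝ => fft ν K ε T l p.1 p.2) := by
  have := cont_psi ε hT
  have := cont_vv ν K ε l hT
  unfold fft wwt
  fun_prop

lemma cont_ffxx (ν K ε l t : ℝ) {T : ℝ} (hT : 0 < T) :
    Continuous (fun x : ℝ => ffxx ν K ε T l t x) := by
  have := cont_psi1 ε hT
  have := continuous_psi2 hT
  have : Continuous (fun x : ℝ => vv ν K ε T l t x) :=
    (cont_vv ν K ε l hT).comp (by fun_prop : Continuous fun x : ℝ => (t, x))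
  unfold ffxx
  fun_prop

lemma ff_nonneg (ν K ε T l t x : ℝ) : 0 ≤ ff ν K ε T l t x := by
  unfold ff; positivity

lemma ff_le_one (ν K ε T l t x : ℝ) : ff ν K ε T l t x ≤ 1 := by
  unfold ff
  refine pow_le_one₀ (by positivity) ?_
  have : 0 < vv ν K ε T l t x := Real.exp_pos _
  rw [max_le_iff]; constructor <;> linarith

lemma theta_bounds {ν T t : ℝ} (hν : 0 < ν) (hT : 0 < T) (ht : t ∈ Set.Icc 0 T) :
    1 / T * Real.exp (-ν) ≤ 1 / T * Real.exp (-(ν / T) * t) ∧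
    1 / T * Real.exp (-(ν / T) * t) ≤ 1 / T := by
  have h1 : 0 ≤ ν / T * t := mul_nonneg (by positivity) ht.1
  have h2 : ν / T * t ≤ ν := by
    calc ν / T * t ≤ ν / T * T := by gcongr; exact ht.2
      _ = ν := by field_simp
  constructor
  · gcongr; linarith
  · have : Real.exp (-(ν / T) * t) ≤ 1 := Real.exp_le_one_iff.2 (by linarith)
    have h3 : 0 < 1 / T := by positivity
    nlinarith

lemma ww_ge {ν K ε T t x : ℝ} (hν : 0 < ν) (hT : 0 < T) (hK : 0 ≤ K) (hε : 0 < ε)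
    (hε2 : ε ≤ 1 / 2) (ht : t ∈ Set.Icc 0 T) :
    1 / T * Real.exp (-ν) * psi ε T x - K ≤ ww ν K ε T t x := by
  unfold ww
  have h1 := (theta_bounds hν hT ht).1
  have h2 := (psi_bounds hT hε hε2 x).1
  have h3 : K / T * t ≤ K := by
    calc K / T * t ≤ K / T * T := by gcongr; exact ht.2
      _ = K := by field_simp
  have := mul_le_mul_of_nonneg_right h1 h2
  linarith

lemma key_ineq {ν d M ε T l t x δ : ℝ} (hν : 0 < ν) (hd : 0 < d) (hT : 0 < T) (hM : 0 < M)
    (hε : 0 < ε) (hε2 : ε ≤ 1 / 2) (hεM : ε * M ≤ d) (ht : t ∈ Set.Icc 0 T)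
    (hδ : -M ≤ δ) (hδ2 : δ ≤ d) :
    0 ≤ fft ν (d + ν / 2) ε T l t x + (δ * ffx ν (d + ν / 2) ε T l t x
      + ν * max x 0 / 2 * ffxx ν (d + ν / 2) ε T l t x) := by
  obtain ⟨p0, -, p1l, p1u, p20, hp2, hp1⟩ := psi_bounds hT hε hε2 x
  obtain ⟨-, hθ⟩ := theta_bounds hν hT ht
  unfold fft ffx ffxx wwt
  have hv : 0 < vv ν (d + ν / 2) ε T l t x := Real.exp_pos _
  have hθ0 : 0 < 1 / T * Real.exp (-(ν / T) * t) := by positivity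
  generalize vv ν (d + ν / 2) ε T l t x = v at *
  generalize 1 / T * Real.exp (-(ν / T) * t) = θ at *
  generalize psi ε T x = ψ at *
  generalize psi1 ε T x = ψ1 at *
  generalize psi2 T x = ψ2 at *
  have hP : 0 ≤ max (1 - v) 0 := le_max_right _ _
  generalize max (1 - v) 0 = P at *
  have hx : 0 ≤ max x 0 := le_max_right _ _
  generalize max x 0 = X at *
  have hT' : 0 < 1 / T := by positivity
  have e1 : ν / T = ν * (1 / T) := by ring
  have e2 : (d + ν / 2) / T = (d + ν / 2) * (1 / T) := by ring
  rw [e1, e2]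
  generalize 1 / T = τ at *
  have hD : δ * ψ1 ≤ d := by
    rcases le_total 0 ψ1 with h | h <;> nlinarith
  have hD2 : θ * (δ * ψ1) ≤ τ * d := by
    calc θ * (δ * ψ1) ≤ θ * d := by gcongr
      _ ≤ τ * d := by gcongr
  have hA : ν / 2 * θ ^ 2 * (X * ψ1 ^ 2) ≤ ν * τ * θ * ψ := by
    calc ν / 2 * θ ^ 2 * (X * ψ1 ^ 2) ≤ ν / 2 * θ ^ 2 * (2 * ψ) := by gcongr
      _ = ν * θ * θ * ψ := by ring
      _ ≤ ν * τ * θ * ψ := by gcongr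
  have hB : ν / 2 * θ * (X * ψ2) ≤ ν / 2 * τ := by
    calc ν / 2 * θ * (X * ψ2) ≤ ν / 2 * θ * 1 := by gcongr
      _ ≤ ν / 2 * τ := by rw [mul_one]; gcongr
  have hbr : 0 ≤ ν * τ * θ * ψ + (d + ν / 2) * τ - θ * (δ * ψ1)
      - ν / 2 * θ ^ 2 * (X * ψ1 ^ 2) - ν / 2 * θ * (X * ψ2) := by linarith
  have h1 : 0 ≤ 3 * P ^ 2 * v * (ν * τ * θ * ψ + (d + ν / 2) * τ - θ * (δ * ψ1)
      - ν / 2 * θ ^ 2 * (X * ψ1 ^ 2) - ν / 2 * θ * (X * ψ2)) := by positivity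
  have h2 : 0 ≤ ν * X / 2 * (6 * P * (v * (θ * ψ1)) ^ 2) := by positivity
  nlinarith [h1, h2]

/-- Support bound. -/
lemma ff_supp {ν K ε T l : ℝ} (hν : 0 < ν) (hT : 0 < T) (hK : 0 ≤ K) (hε : 0 < ε)
    (hε2 : ε ≤ 1 / 2) : ∃ R : ℝ, ∀ t ∈ Set.Icc 0 T, ∀ x, R ≤ |x| → 1 ≤ vv ν K ε T l t x := by
  have hc : 0 < 1 / T * Real.exp (-ν) := by positivity
  refine ⟨(|l| + K) / (1 / T * Real.exp (-ν)) / ε, ?_⟩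
  intro t ht x hx
  have h1 := ww_ge (x := x) hν hT hK hε hε2 ht
  have h2 : ε * |x| ≤ psi ε T x := by
    obtain ⟨a, b⟩ := psi_ge ε hT x
    rcases abs_cases x with ⟨h, h'⟩ | ⟨h, h'⟩ <;> rw [h] <;> nlinarith
  rw [div_le_iff₀ hε, div_le_iff₀ hc] at hx
  have h3 : |l| + K ≤ 1 / T * Real.exp (-ν) * psi ε T x := by nlinarith
  unfold vv
  rw [Real.one_le_exp_iff]
  linarith [le_abs_self l]
lemma pc_bounded {D : ℝ → ℝ} {T : ℝ} (h : PiecewiseConstantOn D 0 T) :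
    (∃ M : ℝ, 0 < M ∧ ∀ t ∈ Set.Icc 0 T, |D t| ≤ M) ∧
      AEMeasurable D (volume.restrict (Set.Ioc 0 T)) := by
  obtain ⟨n, t, c, hm, h0, h1, hc⟩ := h
  have cover : ∀ x ∈ Set.Ico 0 T, ∃ i : Fin n, x ∈ Set.Ico (t i.castSucc) (t i.succ) := by
    intro x hx
    by_contra hcon
    push Not at hcon
    have : ∀ k : Fin (n + 1), t k ≤ x := by
      intro k
      induction k using Fin.induction with
      | zero => rw [h0]; exact hx.1
      | succ i ih =>
        by_contra hlt
        exact hcon i ⟨ih, not_le.1 hlt⟩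
    have := this (Fin.last n)
    rw [h1] at this
    exact absurd hx.2 (not_lt.2 this)
  constructor
  · refine ⟨∑ i, |c i| + |D T| + 1, by positivity, ?_⟩
    intro s hs
    have hsum : 0 ≤ ∑ i, |c i| := Finset.sum_nonneg fun _ _ => abs_nonneg _
    rcases hs.2.lt_or_eq with hlt | heq
    · obtain ⟨i, hi⟩ := cover s ⟨hs.1, hlt⟩
      rw [hc i s hi]
      have := Finset.single_le_sum (f := fun i => |c i|) (fun _ _ => abs_nonneg _) (Finset.mem_univ i)
      have h2 := abs_nonneg (D T)
      linarith
    · rw [heq]; linarith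
  · have hsub : Set.Ico 0 T ⊆ ⋃ i : Fin n, Set.Ico (t i.castSucc) (t i.succ) := by
      intro x hx
      exact Set.mem_iUnion.2 (cover x hx)
    rw [← restrict_Ico_eq_restrict_Ioc]
    refine AEMeasurable.mono_measure ?_ (Measure.restrict_mono hsub le_rfl)
    rw [aemeasurable_iUnion_iff]
    intro i
    refine (aemeasurable_const (b := c i)).congr ?_
    filter_upwards [ae_restrict_mem measurableSet_Ico] with x hx
    exact (hc i x hx).symm

/-- integrability along a path -/
lemma path_integrable {D : ℝ → ℝ} {T M ν : ℝ} {g1 g2 y : ℝ → ℝ}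
    (hDm : AEMeasurable D (volume.restrict (Set.Ioc 0 T)))
    (hDb : ∀ t ∈ Set.Icc 0 T, |D t| ≤ M)
    (hg1 : Continuous g1) (hg2 : Continuous g2) (hy : ContinuousOn y (Set.Ici 0)) :
    IntegrableOn (fun s => D s * g1 (y s) + ν * max (y s) 0 / 2 * g2 (y s)) (Set.Ioc 0 T) := by
  have hy' : ContinuousOn y (Set.Icc 0 T) := hy.mono fun x hx => hx.1
  have hc1 : ContinuousOn (fun s => g1 (y s)) (Set.Icc 0 T) := hg1.comp_continuousOn hy'
  have hc2 : ContinuousOn (fun s => ν * max (y s) 0 / 2 * g2 (y s)) (Set.Icc 0 T) :=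
    (by fun_prop : Continuous fun z => ν * max z 0 / 2 * g2 z).comp_continuousOn hy'
  have i1 : IntegrableOn (fun s => g1 (y s)) (Set.Ioc 0 T) :=
    (hc1.integrableOn_compact isCompact_Icc).mono_set Set.Ioc_subset_Icc_self
  have i2 := (hc2.integrableOn_compact (μ := volume) isCompact_Icc).mono_set Set.Ioc_subset_Icc_self
  refine Integrable.add ?_ i2
  refine Integrable.bdd_mul (c := M) i1 hDm.aestronglyMeasurable ?_
  filter_upwards [ae_restrict_mem measurableSet_Ioc] with s hs
  exact hDb s (Set.Ioc_subset_Icc_self hs)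

/-- hypotheses on test functions -/
structure Test (ν M d T B : ℝ) (f ft fx fxx : ℝ → ℝ → ℝ) : Prop where
  ht : ∀ t x, HasDerivAt (fun s => f s x) (ft t x) t
  hx : ∀ t x, HasDerivAt (f t) (fx t x) x
  hxx : ∀ t x, HasDerivAt (fx t) (fxx t x) x
  cft : Continuous (fun p : ℝ × ℝ => ft p.1 p.2)
  cfxx : ∀ t, Continuous (fxx t)
  supp : ∀ t ∈ Set.Icc 0 T, HasCompactSupport (f t)
  bdd : ∀ t ∈ Set.Icc 0 T, ∀ x, |ft t x| ≤ B
  nonneg : ∀ t x, 0 ≤ f t x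
  le_one : ∀ t x, f t x ≤ 1
  key : ∀ t ∈ Set.Icc 0 T, ∀ x δ, -M ≤ δ → δ ≤ d →
    0 ≤ ft t x + (δ * fx t x + ν * max x 0 / 2 * fxx t x)

section
variable {ν M d T B : ℝ} {f ft fx fxx : ℝ → ℝ → ℝ}

lemma Test.cf (H : Test ν M d T B f ft fx fxx) (t : ℝ) : Continuous (f t) :=
  continuous_iff_continuousAt.2 fun x => (H.hx t x).continuousAt

lemma Test.cfx (H : Test ν M d T B f ft fx fxx) (t : ℝ) : Continuous (fx t) :=
  continuous_iff_continuousAt.2 fun x => (H.hxx t x).continuousAt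

lemma Test.deriv1 (H : Test ν M d T B f ft fx fxx) (t : ℝ) : deriv (f t) = fx t :=
  funext fun x => (H.hx t x).deriv

lemma Test.deriv2 (H : Test ν M d T B f ft fx fxx) (t : ℝ) : iteratedDeriv 2 (f t) = fxx t := by
  rw [iteratedDeriv_succ, iteratedDeriv_one, H.deriv1]
  exact funext fun x => (H.hxx t x).deriv

lemma Test.contDiff (H : Test ν M d T B f ft fx fxx) (t : ℝ) : ContDiff ℝ 2 (f t) := by
  have h1 : ContDiff ℝ 1 (fx t) := by
    rw [contDiff_one_iff_deriv]
    refine ⟨fun x => (H.hxx t x).differentiableAt, ?_⟩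
    have : deriv (fx t) = fxx t := funext fun x => (H.hxx t x).deriv
    rw [this]; exact H.cfxx t
  have : ContDiff ℝ (1 + 1) (f t) := by
    rw [contDiff_succ_iff_deriv]
    refine ⟨fun x => (H.hx t x).differentiableAt, by simp, ?_⟩
    rw [H.deriv1]; exact h1
  exact_mod_cast this

/-- one-step estimate along a path, with error controlled by oscillation -/
lemma path_step (H : Test ν M d T B f ft fx fxx) {D y : ℝ → ℝ}
    (hDm : AEMeasurable D (volume.restrict (Set.Ioc 0 T)))
    (hDb : ∀ t ∈ Set.Icc 0 T, |D t| ≤ M) (hDd : ∀ t ∈ Set.Icc 0 T, D t ≤ d)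
    (hy : ContinuousOn y (Set.Ici 0)) {p q e : ℝ} (hp : 0 ≤ p) (hpq : p ≤ q) (hq : q ≤ T)
    (he : ∀ ξ ∈ Set.Icc p q, ∀ r ∈ Set.Icc p q, ft p (y r) - ft ξ (y q) ≤ e) :
    -(e * (q - p)) ≤ f q (y q) - f p (y q) + ∫ s in Set.Ioc p q,
      (D s * fx p (y s) + ν * max (y s) 0 / 2 * fxx p (y s)) := by
  rcases hpq.eq_or_lt with rfl | hlt
  · simp
  obtain ⟨ξ, hξ, hξe⟩ := exists_hasDerivAt_eq_slope (fun s => f s (y q)) (fun s => ft s (y q)) hlt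
    (fun s _ => (H.ht s (y q)).continuousAt.continuousWithinAt) (fun s _ => H.ht s (y q))
  have hs : f q (y q) - f p (y q) = ft ξ (y q) * (q - p) := by
    rw [hξe, div_mul_cancel₀]; linarith
  have hintg := (path_integrable (ν := ν) hDm hDb (H.cfx p) (H.cfxx p) hy).mono_set
    (Set.Ioc_subset_Ioc hp hq)
  have hle : ∫ _s in Set.Ioc p q, (-(e + ft ξ (y q))) ≤ ∫ s in Set.Ioc p q,
      (D s * fx p (y s) + ν * max (y s) 0 / 2 * fxx p (y s)) := by
    refine setIntegral_mono_on (integrableOn_const (by simp)) hintg measurableSet_Ioc ?_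
    intro s hs
    have hsT : s ∈ Set.Icc 0 T := ⟨hp.trans hs.1.le, hs.2.trans hq⟩
    have h1 := H.key p ⟨hp, hpq.trans hq⟩ (y s) (D s) (neg_le_of_abs_le (hDb s hsT)) (hDd s hsT)
    have h2 := he ξ ⟨hξ.1.le, hξ.2.le⟩ s ⟨hs.1.le, hs.2⟩
    linarith
  rw [setIntegral_const, Real.volume_real_Ioc_of_le hpq, smul_eq_mul] at hle
  rw [hs]
  linarith

lemma path_osc (H : Test ν M d T B f ft fx fxx) {y : ℝ → ℝ}
    (hy : ContinuousOn y (Set.Ici 0)) {e : ℝ} (he : 0 < e) :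
    ∃ δ > 0, ∀ p q, 0 ≤ p → p ≤ q → q ≤ T → q - p < δ →
      ∀ ξ ∈ Set.Icc p q, ∀ r ∈ Set.Icc p q, ft p (y r) - ft ξ (y q) ≤ e := by
  have hc : ContinuousOn (fun z : ℝ × ℝ => ft z.1 (y z.2)) (Set.Icc 0 T ×ˢ Set.Icc 0 T) := by
    have h1 : ContinuousOn (fun z : ℝ × ℝ => (z.1, y z.2)) (Set.Icc 0 T ×ˢ Set.Icc 0 T) :=
      continuousOn_fst.prodMk (hy.comp continuousOn_snd fun z hz => hz.2.1)
    exact H.cft.comp_continuousOn h1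
  have hu := (isCompact_Icc.prod isCompact_Icc).uniformContinuousOn_of_continuous hc
  rw [Metric.uniformContinuousOn_iff] at hu
  obtain ⟨δ, hδ, h⟩ := hu e he
  refine ⟨δ, hδ, ?_⟩
  intro p q hp hpq hq hd ξ hξ r hr
  have := h (p, r) ⟨⟨hp, hpq.trans hq⟩, ⟨hp.trans hr.1, hr.2.trans hq⟩⟩
    (ξ, q) ⟨⟨hp.trans hξ.1, hξ.2.trans hq⟩, ⟨hp.trans hpq, hq⟩⟩ (by
      rw [Prod.dist_eq, max_lt_iff, Real.dist_eq, Real.dist_eq, abs_lt, abs_lt]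
      obtain ⟨a1, a2⟩ := hξ
      obtain ⟨b1, b2⟩ := hr
      constructor <;> constructor <;> simp only <;> linarith)
  rw [Real.dist_eq] at this
  exact (le_abs_self _).trans this.le

/-- submartingale property of the time-dependent test function -/
lemma submart (H : Test ν M d T B f ft fx fxx) {D : ℝ → ℝ}
    (hDm : AEMeasurable D (volume.restrict (Set.Ioc 0 T)))
    (hDb : ∀ t ∈ Set.Icc 0 T, |D t| ≤ M) (hDd : ∀ t ∈ Set.Icc 0 T, D t ≤ d)
    {Ω : Type} [MeasureSpace Ω] [IsProbabilityMeasure (volume : Measure Ω)] {Y : Ω → ℝ → ℝ}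
    (hYm : ∀ t : ℝ, Measurable fun ω => Y ω t)
    (hYc : ∀ᵐ ω ∂(volume : Measure Ω), ContinuousOn (Y ω) (Set.Ici 0))
    {F : ℝ → MeasurableSpace Ω} (hF : Monotone F)
    (hFle : ∀ t, F t ≤ (inferInstance : MeasurableSpace Ω))
    (hmart : ∀ f : ℝ → ℝ, ContDiff ℝ 2 f → HasCompactSupport f →
      MartingaleFrom 0 F fun t ω =>
        f (Y ω t) - ∫ s in Set.Ioc 0 t,
          (D s * deriv f (Y ω s) + ν * max (Y ω s) 0 / 2 * iteratedDeriv 2 f (Y ω s)))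
    {s t : ℝ} (hs : 0 ≤ s) (hst : s ≤ t) (htT : t ≤ T) {A : Set Ω} (hA : MeasurableSet[F s] A) :
    ∫ ω in A, f s (Y ω s) ≤ ∫ ω in A, f t (Y ω t) := by
  have hA' : MeasurableSet A := hFle s A hA
  -- integrability of f
  have hfi : ∀ a b : ℝ, Integrable (fun ω => f a (Y ω b)) (volume : Measure Ω) := by
    intro a b
    refine Integrable.of_bound (C := 1) ((H.cf a).measurable.comp (hYm b)).aestronglyMeasurable ?_
    refine Eventually.of_forall fun ω => ?_
    rw [Real.norm_eq_abs, abs_of_nonneg (H.nonneg _ _)]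
    exact H.le_one _ _
  let X : ℝ → ℝ → Ω → ℝ := fun p r ω => f p (Y ω r) - ∫ s in Set.Ioc 0 r,
          (D s * fx p (Y ω s) + ν * max (Y ω s) 0 / 2 * fxx p (Y ω s))
  have hX : ∀ p ∈ Set.Icc 0 T, MartingaleFrom 0 F (X p) := by
    intro p hp
    have := hmart (f p) (H.contDiff p) (H.supp p hp)
    rw [H.deriv1, H.deriv2] at this
    exact this
  let R : ℝ → ℝ → Ω → ℝ := fun p q ω => f q (Y ω q) - f p (Y ω p) - (X p q ω - X p p ω)
  have hRi : ∀ p q, 0 ≤ p → p ≤ q → q ≤ T → Integrable (R p q) (volume : Measure Ω) := by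
    intro p q hp hpq hq
    have h := (hX p ⟨hp, hpq.trans hq⟩).1
    exact ((hfi q q).sub (hfi p p)).sub ((h q (hp.trans hpq)).sub (h p hp))
  have hRint : ∀ p q, s ≤ p → p ≤ q → q ≤ T →
      ∫ ω in A, R p q ω = (∫ ω in A, f q (Y ω q)) - ∫ ω in A, f p (Y ω p) := by
    intro p q hsp hpq hq
    have hp : 0 ≤ p := hs.trans hsp
    obtain ⟨h1, h2⟩ := hX p ⟨hp, hpq.trans hq⟩
    have hAp : MeasurableSet[F p] A := hF hsp A hA
    have e1 : ∫ ω in A, X p q ω = ∫ ω in A, X p p ω := by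
      rw [← setIntegral_condExp (hFle p) (h1 q (hp.trans hpq)) hAp]
      exact integral_congr_ae (ae_restrict_of_ae (h2 p q hp hpq))
    have i1 := (h1 q (hp.trans hpq)).integrableOn (s := A)
    have i2 := (h1 p hp).integrableOn (s := A)
    have i3 := (hfi q q).integrableOn (s := A)
    have i4 := (hfi p p).integrableOn (s := A)
    show ∫ ω in A, (f q (Y ω q) - f p (Y ω p) - (X p q ω - X p p ω)) = _
    have j1 := integral_sub (i3.sub i4) (i1.sub i2)
    have j2 := integral_sub i3 i4
    have j3 := integral_sub i1 i2
    simp only [Pi.sub_apply] at j1 j2 j3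
    rw [j1, j2, j3, e1]
    ring
  have hRpath : ∀ ω, ContinuousOn (Y ω) (Set.Ici 0) → ∀ p q e, 0 ≤ p → p ≤ q → q ≤ T →
      (∀ ξ ∈ Set.Icc p q, ∀ r ∈ Set.Icc p q, ft p (Y ω r) - ft ξ (Y ω q) ≤ e) →
      -(e * (q - p)) ≤ R p q ω := by
    intro ω hω p q e hp hpq hq he
    have h := path_step H hDm hDb hDd hω hp hpq hq he
    have hintg := (path_integrable (ν := ν) hDm hDb (H.cfx p) (H.cfxx p) hω)
    have hun : Set.Ioc 0 q = Set.Ioc 0 p ∪ Set.Ioc p q := (Set.Ioc_union_Ioc_eq_Ioc hp hpq).symm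
    have e1 : ∫ s in Set.Ioc 0 q, (D s * fx p (Y ω s) + ν * max (Y ω s) 0 / 2 * fxx p (Y ω s))
        = (∫ s in Set.Ioc 0 p, (D s * fx p (Y ω s) + ν * max (Y ω s) 0 / 2 * fxx p (Y ω s)))
        + ∫ s in Set.Ioc p q, (D s * fx p (Y ω s) + ν * max (Y ω s) 0 / 2 * fxx p (Y ω s)) := by
      rw [hun, setIntegral_union _ measurableSet_Ioc]
      · exact hintg.mono_set (Set.Ioc_subset_Ioc le_rfl (hpq.trans hq))
      · exact hintg.mono_set (Set.Ioc_subset_Ioc hp hq)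
      · exact Set.Ioc_disjoint_Ioc_of_le le_rfl
    show _ ≤ f q (Y ω q) - f p (Y ω p) - ((f p (Y ω q) - _) - (f p (Y ω p) - _))
    rw [e1]
    linarith
  -- partition
  let g : ℕ → ℕ → ℝ := fun N k => s + k * ((t - s) / (N + 1))
  have hstep : ∀ N k, g N (k + 1) - g N k = (t - s) / (N + 1) := by
    intro N k; simp only [g]; push_cast; ring
  have hh0 : ∀ N : ℕ, 0 ≤ (t - s) / (N + 1 : ℝ) := fun N => div_nonneg (by linarith) (by positivity)
  have hg0 : ∀ N, g N 0 = s := by intro N; simp [g]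
  have hgN : ∀ N, g N (N + 1) = t := by
    intro N; simp only [g]; push_cast
    have : (N + 1 : ℝ) ≠ 0 := by positivity
    field_simp; ring
  have hgm : ∀ N, Monotone (g N) := fun N => monotone_nat_of_le_succ fun k => by
    have := hstep N k; have := hh0 N; linarith
  have hgs : ∀ N k, s ≤ g N k := fun N k => by rw [← hg0 N]; exact hgm N (Nat.zero_le _)
  have hgt : ∀ N k, k ≤ N + 1 → g N k ≤ T := fun N k hk => by
    have := hgm N hk; rw [hgN] at this; linarith
  let S : ℕ → Ω → ℝ := fun N ω => ∑ k ∈ Finset.range (N + 1), R (g N k) (g N (k + 1)) ω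
  have hRi' : ∀ N, ∀ k ∈ Finset.range (N + 1),
      Integrable (R (g N k) (g N (k + 1))) (volume : Measure Ω) := by
    intro N k hk
    have hk' := Finset.mem_range.1 hk
    exact hRi _ _ (hs.trans (hgs N k)) (hgm N (Nat.le_succ k)) (hgt N _ (by omega))
  have hSi : ∀ N, Integrable (S N) (volume : Measure Ω) := fun N => integrable_finsetSum _ (hRi' N)
  have hSint : ∀ N, ∫ ω in A, S N ω = (∫ ω in A, f t (Y ω t)) - ∫ ω in A, f s (Y ω s) := by
    intro N
    simp only [S]
    rw [integral_finsetSum _ fun k hk => (hRi' N k hk).integrableOn]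
    let G : ℕ → ℝ := fun k => ∫ ω in A, f (g N k) (Y ω (g N k))
    have : ∀ k ∈ Finset.range (N + 1), ∫ ω in A, R (g N k) (g N (k + 1)) ω =
        G (k + 1) - G k := by
      intro k hk
      have hk' := Finset.mem_range.1 hk
      exact hRint _ _ (hgs N k) (hgm N (Nat.le_succ k)) (hgt N _ (by omega))
    rw [Finset.sum_congr rfl this, Finset.sum_range_sub]
    simp only [G, hg0, hgN]
  have hSlow : ∀ ω, ContinuousOn (Y ω) (Set.Ici 0) → ∀ (N : ℕ) (e : ℝ),
      (∀ p q, 0 ≤ p → p ≤ q → q ≤ T → q - p = (t - s) / (N + 1 : ℝ) →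
      ∀ ξ ∈ Set.Icc p q, ∀ r ∈ Set.Icc p q, ft p (Y ω r) - ft ξ (Y ω q) ≤ e) →
      -(e * (t - s)) ≤ S N ω := by
    intro ω hω N e he
    have h1 : ∀ k ∈ Finset.range (N + 1), -(e * ((t - s) / (N + 1 : ℝ))) ≤
        R (g N k) (g N (k + 1)) ω := by
      intro k hk
      have hk' := Finset.mem_range.1 hk
      have a1 := hs.trans (hgs N k)
      have a2 := hgm N (Nat.le_succ k)
      have a3 := hgt N (k + 1) (by omega)
      have := hRpath ω hω _ _ e a1 a2 a3 (he _ _ a1 a2 a3 (hstep N k))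
      rwa [Nat.succ_eq_add_one, hstep] at this
    have h2 := Finset.sum_le_sum h1
    rw [Finset.sum_const, Finset.card_range, nsmul_eq_mul] at h2
    refine le_trans (le_of_eq ?_) h2
    push_cast
    have : (N + 1 : ℝ) ≠ 0 := by positivity
    field_simp
  have hB0 : 0 ≤ B := (abs_nonneg _).trans (H.bdd s ⟨hs, hst.trans htT⟩ 0)
  -- negative part tends to zero
  have hlim : Tendsto (fun N => ∫ ω in A, min (S N ω) 0) atTop (nhds (∫ ω in A, (0 : ℝ))) := by
    refine tendsto_integral_of_dominated_convergence (fun _ => 2 * B * (t - s)) ?_ ?_ ?_ ?_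
    · intro N
      exact ((hSi N).inf (integrable_zero _ _ _)).integrableOn.aestronglyMeasurable
    · exact integrable_const _
    · intro N
      filter_upwards [ae_restrict_of_ae hYc] with ω hω
      have := hSlow ω hω N (2 * B) (by
        intro p q hp hpq hq _ ξ hξ r hr
        have b1 := abs_le.1 (H.bdd p ⟨hp, hpq.trans hq⟩ (Y ω r))
        have b2 := abs_le.1 (H.bdd ξ ⟨hp.trans hξ.1, hξ.2.trans hq⟩ (Y ω q))
        linarith [b1.2, b2.1])
      rw [Real.norm_eq_abs, abs_of_nonpos (min_le_right _ _)]
      rcases min_cases (S N ω) 0 with ⟨h, _⟩ | ⟨h, _⟩ <;> rw [h]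
      · linarith
      · have : 0 ≤ 2 * B * (t - s) := mul_nonneg (by linarith) (by linarith)
        linarith
    · filter_upwards [ae_restrict_of_ae hYc] with ω hω
      rw [Metric.tendsto_atTop]
      intro η hη
      have he : 0 < η / (t - s + 1) := div_pos hη (by linarith)
      obtain ⟨δ, hδ, hosc⟩ := path_osc H hω he
      have hl : Tendsto (fun N : ℕ => (t - s) / (N + 1 : ℝ)) atTop (nhds 0) := by
        have := (tendsto_one_div_add_atTop_nhds_zero_nat (𝕜 := ℝ)).const_mul (t - s)
        simpa [div_eq_mul_inv] using this
      obtain ⟨N0, hN0⟩ := eventually_atTop.1 (hl.eventually_lt_const hδ)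
      refine ⟨N0, fun N hN => ?_⟩
      have := hSlow ω hω N (η / (t - s + 1)) (by
        intro p q hp hpq hq hqp
        exact hosc p q hp hpq hq (by rw [hqp]; exact hN0 N hN))
      have h3 : η / (t - s + 1) * (t - s) < η := by
        rw [div_mul_eq_mul_div, div_lt_iff₀ (by linarith)]; nlinarith
      rw [Real.dist_eq, sub_zero, abs_of_nonpos (min_le_right _ _)]
      rcases min_cases (S N ω) 0 with ⟨h, _⟩ | ⟨h, _⟩ <;> rw [h] <;> linarith
  have hle : ∀ N, ∫ ω in A, min (S N ω) 0 ≤ (∫ ω in A, f t (Y ω t)) - ∫ ω in A, f s (Y ω s) := by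
    intro N
    rw [← hSint N]
    exact integral_mono ((hSi N).inf (integrable_zero _ _ _)).integrableOn (hSi N).integrableOn
      fun ω => min_le_left _ _
  have := le_of_tendsto' hlim hle
  simp only [integral_zero] at this
  linarith
end
section
variable {ν M d T B : ℝ} {f ft fx fxx : ℝ → ℝ → ℝ}

/-- maximal inequality on a grid -/
lemma grid_max (H : Test ν M d T B f ft fx fxx)
    {Ω : Type} [MeasureSpace Ω] [IsProbabilityMeasure (volume : Measure Ω)] {Y : Ω → ℝ → ℝ}
    (hYm : ∀ t : ℝ, Measurable fun ω => Y ω t) {y : ℝ}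
    (hY0 : ∀ᵐ ω ∂(volume : Measure Ω), Y ω 0 = y)
    {F : ℝ → MeasurableSpace Ω} (hF : Monotone F)
    (hFle : ∀ t, F t ≤ (inferInstance : MeasurableSpace Ω))
    (hFa : ∀ t : ℝ, 0 ≤ t → @Measurable Ω ℝ (F t) _ fun ω => Y ω t)
    (hsub : ∀ s t : ℝ, 0 ≤ s → s ≤ t → t ≤ T → ∀ A : Set Ω, MeasurableSet[F s] A →
      ∫ ω in A, f s (Y ω s) ≤ ∫ ω in A, f t (Y ω t))
    {τ : ℕ → ℝ} (hτ : Monotone τ) (hτ0 : τ 0 = 0) (n : ℕ) (hτn : τ n ≤ T) :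
    (volume : Measure Ω) {ω | ∃ j ≤ n, f (τ j) (Y ω (τ j)) = 0} ≤ ENNReal.ofReal (1 - f 0 y) := by
  have hτp : ∀ k, 0 ≤ τ k := fun k => by rw [← hτ0]; exact hτ (Nat.zero_le k)
  let E : ℕ → Set Ω := fun k => {ω | ∀ j ≤ k, f (τ j) (Y ω (τ j)) ≠ 0}
  have hEm : ∀ k, MeasurableSet[F (τ k)] (E k) := by
    intro k
    have : E k = ⋂ j, ⋂ (_ : j ≤ k), {ω | f (τ j) (Y ω (τ j)) ≠ 0} := by
      ext ω; simp [E]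
    rw [this]
    refine MeasurableSet.iInter fun j => MeasurableSet.iInter fun hj => ?_
    have h1 : MeasurableSet[F (τ j)] {ω | f (τ j) (Y ω (τ j)) ≠ 0} := by
      have h2 : @Measurable Ω ℝ (F (τ j)) _ fun ω => f (τ j) (Y ω (τ j)) :=
        (H.cf (τ j)).measurable.comp (hFa (τ j) (hτp j))
      exact h2 (measurableSet_singleton (0 : ℝ)).compl
    exact hF (hτ hj) _ h1
  have hEm' : ∀ k, MeasurableSet (E k) := fun k => hFle _ _ (hEm k)
  have hfi : ∀ a b : ℝ, Integrable (fun ω => f a (Y ω b)) (volume : Measure Ω) := by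
    intro a b
    refine Integrable.of_bound (C := 1) ((H.cf a).measurable.comp (hYm b)).aestronglyMeasurable ?_
    refine Eventually.of_forall fun ω => ?_
    rw [Real.norm_eq_abs, abs_of_nonneg (H.nonneg _ _)]
    exact H.le_one _ _
  have hind : ∀ k, k ≤ n → f 0 y ≤ ∫ ω in E k, f (τ k) (Y ω (τ k)) := by
    intro k
    induction k with
    | zero =>
      intro _
      have h1 : ∫ ω in E 0, f (τ 0) (Y ω (τ 0)) = ∫ ω, f (τ 0) (Y ω (τ 0)) := by
        refine setIntegral_eq_integral_of_forall_compl_eq_zero ?_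
        intro ω hω
        simpa [E] using hω
      rw [h1, hτ0]
      have h2 : ∫ ω, f 0 (Y ω 0) = ∫ _ω : Ω, f 0 y := by
        refine integral_congr_ae ?_
        filter_upwards [hY0] with ω hω
        rw [hω]
      rw [h2]; simp
    | succ k ih =>
      intro hk
      refine (ih (by omega)).trans ?_
      refine (hsub (τ k) (τ (k + 1)) (hτp k) (hτ (Nat.le_succ k)) ((hτ hk).trans hτn) (E k) (hEm k)).trans ?_
      refine le_of_eq (setIntegral_eq_of_subset_of_forall_sdiff_eq_zero (hEm' k) ?_ ?_)
      · intro ω hω j hj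
        exact hω j (by omega)
      · intro ω hω
        by_contra hne
        refine hω.2 ?_
        intro j hj
        rcases Nat.lt_or_ge j (k + 1) with h | h
        · exact hω.1 j (by omega)
        · have : j = k + 1 := by omega
          rw [this]; exact hne
  have h1 : ∫ ω in E n, f (τ n) (Y ω (τ n)) ≤ (volume : Measure Ω).real (E n) := by
    calc ∫ ω in E n, f (τ n) (Y ω (τ n)) ≤ ∫ _ω in E n, (1 : ℝ) :=
          integral_mono (hfi _ _).integrableOn (integrable_const _) fun ω => H.le_one _ _
      _ = _ := by simp
  have h2 : {ω | ∃ j ≤ n, f (τ j) (Y ω (τ j)) = 0} = (E n)ᶜ := by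
    ext ω; simp [E]
  rw [h2]
  rw [← ofReal_measureReal]
  refine ENNReal.ofReal_le_ofReal ?_
  rw [probReal_compl_eq_one_sub (hEm' n)]
  linarith [hind n le_rfl]

end

lemma mkTest {ν d M ε T l : ℝ} (hν : 0 < ν) (hd : 0 < d) (hT : 0 < T) (hM : 0 < M)
    (hε : 0 < ε) (hε2 : ε ≤ 1 / 2) (hεM : ε * M ≤ d) :
    ∃ B, Test ν M d T B (ff ν (d + ν / 2) ε T l) (fft ν (d + ν / 2) ε T l)
      (ffx ν (d + ν / 2) ε T l) (ffxx ν (d + ν / 2) ε T l) := by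
  have hK : 0 ≤ d + ν / 2 := by positivity
  obtain ⟨R, hR⟩ := ff_supp (l := l) hν hT hK hε hε2
  obtain ⟨B, hB⟩ := (isCompact_Icc.prod isCompact_Icc).exists_bound_of_continuousOn
    (s := Set.Icc 0 T ×ˢ Set.Icc (-R) R) (cont_fft ν (d + ν / 2) ε l hT).continuousOn
  refine ⟨max B 0, ?_⟩
  refine ⟨fun t x => hasDerivAt_ff_t _ _ _ _ _ _ _, fun t x => hasDerivAt_ff_x _ _ _ _ _ hT _,
    fun t x => hasDerivAt_ff_xx _ _ _ _ _ hT _, cont_fft _ _ _ _ hT,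
    fun t => cont_ffxx _ _ _ _ _ hT, ?_, ?_, fun _ _ => ff_nonneg _ _ _ _ _ _ _,
    fun _ _ => ff_le_one _ _ _ _ _ _ _, ?_⟩
  · intro t ht
    refine HasCompactSupport.intro (isCompact_Icc (a := -R) (b := R)) ?_
    intro x hx
    have h1 : R ≤ |x| := by
      by_contra hcon
      exact hx (abs_le.1 (not_le.1 hcon).le)
    have := hR t ht x h1
    unfold ff
    rw [max_eq_right (by linarith)]
    simp
  · intro t ht x
    by_cases hx : x ∈ Set.Icc (-R) R
    · exact (hB (t, x) ⟨ht, hx⟩).trans (le_max_left _ _)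
    · have h1 : R ≤ |x| := by
        by_contra hcon
        exact hx (abs_le.1 (not_le.1 hcon).le)
      have := hR t ht x h1
      unfold fft
      rw [max_eq_right (by linarith)]
      simp
  · intro t ht x δ h1 h2
    exact key_ineq hν hd hT hM hε hε2 hεM ht h1 h2

/-- For `Y` solving `dY = D(t)dt + √(ν(Y)₊)dB` on `[0,T]` with `Y(0) = y ∈ (0,T]`,
`D` piecewise constant and bounded above by `d > 0`, there are `C, c > 0` depending only on
`d` and `ν` such that `P(sup_{t≤T} Y(t) ≥ xT) ≤ C e^{−cx}` for all `x ≥ 0`. -/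
theorem statement7 (ν d : ℝ) (hν : 0 < ν) (hd : 0 < d) :
    ∃ C c : ℝ, 0 < C ∧ 0 < c ∧
      ∀ (T y : ℝ) (D : ℝ → ℝ), 0 < T → y ∈ Set.Ioc (0:ℝ) T →
        PiecewiseConstantOn D 0 T → (∀ t ∈ Set.Icc (0:ℝ) T, D t ≤ d) →
      ∀ (Ω : Type) [MeasureSpace Ω] [IsProbabilityMeasure (volume : Measure Ω)],
      ∀ Y : Ω → ℝ → ℝ,
        IsDiffusionFrom 0 (fun s _ => D s) (fun _ x => ν * max x 0) y Y →
        ∀ x : ℝ, 0 ≤ x →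
          volume {ω | x * T ≤ sSup (Y ω '' Set.Icc 0 T)}
            ≤ ENNReal.ofReal (C * Real.exp (-c * x)) := by
  refine ⟨3 * (1 + Real.exp 1) * Real.exp (d + ν / 2) * Real.exp (Real.exp (-ν) / 2),
    Real.exp (-ν) / 2, by positivity, by positivity, ?_⟩
  intro T y D hT hy hpc hDd Ω _ _ Y hY x hx
  obtain ⟨⟨M, hM, hDb⟩, hDm⟩ := pc_bounded hpc
  obtain ⟨hYm, hYc, F, hF, hFle, hFa, hmart⟩ := hY
  set K := d + ν / 2 with hKdef
  have hK : 0 ≤ K := by positivity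
  let ε : ℝ := min (1 / 2) (d / M)
  have hε : 0 < ε := lt_min (by norm_num) (by positivity)
  have hε2 : ε ≤ 1 / 2 := min_le_left _ _
  have hεM : ε * M ≤ d := by
    have : ε ≤ d / M := min_le_right _ _
    rwa [le_div_iff₀ hM] at this
  let l : ℝ := Real.exp (-ν) / 2 * (x - 1) - K
  obtain ⟨B, H⟩ := mkTest (l := l) hν hd hT hM hε hε2 hεM
  have hsub : ∀ s t : ℝ, 0 ≤ s → s ≤ t → t ≤ T → ∀ A : Set Ω, MeasurableSet[F s] A →
      ∫ ω in A, ff ν K ε T l s (Y ω s) ≤ ∫ ω in A, ff ν K ε T l t (Y ω t) := by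
    intro s t hs hst htT A hA
    exact submart H hDm hDb hDd hYm (hYc.mono fun ω h => h.1) hF hFle hmart hs hst htT hA
  let τ : ℕ → ℕ → ℝ := fun N k => T * k / 2 ^ N
  have hτ : ∀ N, Monotone (τ N) := by
    intro N a b hab
    simp only [τ]
    gcongr
  let G : ℕ → Set Ω := fun N => {ω | ∃ j ≤ 2 ^ N, (x - 1) * T < Y ω (τ N j)}
  have hGm : Monotone G := by
    refine monotone_nat_of_le_succ fun N => ?_
    rintro ω ⟨j, hj, hω⟩
    refine ⟨2 * j, by rw [pow_succ]; omega, ?_⟩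
    have : τ (N + 1) (2 * j) = τ N j := by
      simp only [τ]; push_cast; rw [pow_succ]; field_simp
    rw [this]; exact hω
  have hτT : ∀ N, τ N (2 ^ N) = T := by
    intro N; simp only [τ]; push_cast; field_simp
  have hτ0 : ∀ N, τ N 0 = 0 := by intro N; simp [τ]
  have hv0 : 1 - ff ν K ε T l 0 y ≤
      3 * (1 + Real.exp 1) * Real.exp K * Real.exp (Real.exp (-ν) / 2)
        * Real.exp (-(Real.exp (-ν) / 2) * x) := by
    have h1 : vv ν K ε T l 0 y ≤ (1 + Real.exp 1) * Real.exp (-l) := by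
      unfold vv ww psi
      rw [sub_eq_add_neg _ l, Real.exp_add]
      refine mul_le_mul_of_nonneg_right ?_ (Real.exp_pos _).le
      have h2 : (1 : ℝ) + Real.exp (y / T) ≤ 1 + Real.exp 1 := by
        have : y / T ≤ 1 := by rw [div_le_one hT]; exact hy.2
        gcongr
      refine le_trans ?_ h2
      have h3 : (1 / T) * (T * Real.log (1 + Real.exp (y / T)) - ε * y)
          ≤ Real.log (1 + Real.exp (y / T)) := by
        have h4 : 0 ≤ ε * y / T := div_nonneg (mul_nonneg hε.le hy.1.le) hT.le
        have h5 : (1 / T) * (T * Real.log (1 + Real.exp (y / T)) - ε * y)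
          = Real.log (1 + Real.exp (y / T)) - ε * y / T := by field_simp
        linarith
      rw [← Real.le_log_iff_exp_le (by positivity)]
      simpa using h3
    have h2 : Real.exp (-l) = Real.exp K * Real.exp (Real.exp (-ν) / 2)
        * Real.exp (-(Real.exp (-ν) / 2) * x) := by
      rw [← Real.exp_add, ← Real.exp_add]
      congr 1
      simp only [l]; ring
    have hvp : 0 < vv ν K ε T l 0 y := Real.exp_pos _
    have h3 : 1 - ff ν K ε T l 0 y ≤ 3 * vv ν K ε T l 0 y := by
      unfold ff
      generalize vv ν K ε T l 0 y = v at *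
      rcases le_total v 1 with hv | hv
      · rw [max_eq_left (by linarith)]
        nlinarith [mul_nonneg (sq_nonneg v) (by linarith : 0 ≤ 3 - v)]
      · rw [max_eq_right (by linarith)]
        norm_num; linarith
    rw [h2] at h1
    nlinarith
  have hG : ∀ N, (volume : Measure Ω) (G N) ≤ ENNReal.ofReal
      (3 * (1 + Real.exp 1) * Real.exp K * Real.exp (Real.exp (-ν) / 2)
        * Real.exp (-(Real.exp (-ν) / 2) * x)) := by
    intro N
    refine le_trans (measure_mono ?_) ((grid_max H hYm (hYc.mono fun ω h => h.2) hF hFle hFa hsub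
      (hτ N) (hτ0 N) (2 ^ N) (hτT N).le).trans (ENNReal.ofReal_le_ofReal hv0))
    rintro ω ⟨j, hj, hω⟩
    refine ⟨j, hj, ?_⟩
    have ht : τ N j ∈ Set.Icc 0 T := by
      constructor
      · rw [← hτ0 N]; exact hτ N (Nat.zero_le _)
      · rw [← hτT N]; exact hτ N hj
    have h1 := ww_ge (x := Y ω (τ N j)) hν hT hK hε hε2 ht
    have h2 := (psi_bounds hT hε hε2 (Y ω (τ N j))).2.1
    have h3 : l ≤ ww ν K ε T (τ N j) (Y ω (τ N j)) := by
      refine le_trans ?_ h1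
      simp only [l]
      have h4 : (x - 1) * T / 2 ≤ psi ε T (Y ω (τ N j)) := by linarith
      have h5 : Real.exp (-ν) / 2 * (x - 1) = 1 / T * Real.exp (-ν) * ((x - 1) * T / 2) := by
        field_simp
      rw [h5]
      gcongr
    have h6 : 1 ≤ vv ν K ε T l (τ N j) (Y ω (τ N j)) := by
      unfold vv; rw [Real.one_le_exp_iff]; linarith
    unfold ff
    rw [max_eq_right (by linarith)]
    simp
  have hU : (volume : Measure Ω) (⋃ N, G N) ≤ ENNReal.ofReal
      (3 * (1 + Real.exp 1) * Real.exp K * Real.exp (Real.exp (-ν) / 2)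
        * Real.exp (-(Real.exp (-ν) / 2) * x)) := by
    rw [hGm.measure_iUnion]
    exact iSup_le hG
  refine le_trans (measure_mono_ae ?_) hU
  filter_upwards [hYc] with ω hω hmem
  have hmem' : x * T ≤ sSup (Y ω '' Set.Icc 0 T) := hmem
  have hlt : (x - 1) * T < sSup (Y ω '' Set.Icc 0 T) := by nlinarith
  obtain ⟨_, ⟨t, ht, rfl⟩, hYt⟩ := exists_lt_of_lt_csSup
    ((Set.nonempty_Icc.2 hT.le).image _) hlt
  -- dyadic approximation
  let k : ℕ → ℕ := fun N => ⌊t / T * 2 ^ N⌋₊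
  have htT0 : 0 ≤ t / T := div_nonneg ht.1 hT.le
  have hk1 : ∀ N, τ N (k N) ≤ t := by
    intro N
    have := Nat.floor_le (a := t / T * 2 ^ N) (by positivity)
    simp only [τ, k]
    rw [div_le_iff₀ (by positivity)]
    calc T * (⌊t / T * 2 ^ N⌋₊ : ℝ) ≤ T * (t / T * 2 ^ N) := by gcongr
      _ = t * 2 ^ N := by field_simp
  have hk2 : ∀ N, t - T * (1 / 2) ^ N ≤ τ N (k N) := by
    intro N
    have := (Nat.lt_floor_add_one (t / T * 2 ^ N)).le
    simp only [τ, k]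
    rw [le_div_iff₀ (by positivity)]
    have h1 : T * (t / T * 2 ^ N) ≤ T * ((⌊t / T * 2 ^ N⌋₊ : ℝ) + 1) := by gcongr
    have h2 : T * (t / T * 2 ^ N) = t * 2 ^ N := by field_simp
    have h3 : (t - T * (1 / 2) ^ N) * 2 ^ N = t * 2 ^ N - T := by
      rw [sub_mul, mul_assoc, ← mul_pow]; norm_num
    rw [h3]; linarith
  have hlim : Tendsto (fun N => τ N (k N)) atTop (nhds t) := by
    refine tendsto_of_tendsto_of_tendsto_of_le_of_le ?_ tendsto_const_nhds hk2 hk1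
    have := (tendsto_pow_atTop_nhds_zero_of_lt_one (r := (1 / 2 : ℝ)) (by norm_num)
      (by norm_num)).const_mul T
    simpa using this.const_sub t
  have hlim2 : Tendsto (fun N => τ N (k N)) atTop (nhdsWithin t (Set.Ici 0)) := by
    refine tendsto_nhdsWithin_iff.2 ⟨hlim, Eventually.of_forall fun N => ?_⟩
    rw [Set.mem_Ici, ← hτ0 N]; exact hτ N (Nat.zero_le _)
  have hlim3 := (hω.1 t ht.1).tendsto.comp hlim2
  obtain ⟨N, hN⟩ := (hlim3.eventually_const_lt hYt).exists
  refine Set.mem_iUnion.2 ⟨N, k N, ?_, hN⟩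
  refine Nat.floor_le_of_le ?_
  push_cast
  have : t / T ≤ 1 := by rw [div_le_one hT]; exact ht.2
  have h2 : (0 : ℝ) < 2 ^ N := by positivity
  nlinarith

end Paper
end
end
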